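/- Let μ_α and μ_β satisfy Assumption 2, let ω_α, ω_β be subordination functions for the pair, let μ_α ⊞ μ_β be the associated free additive convolution with continuous density ρ_{α⊞β}, and let E₀ be an interior point of 𝒱_{α⊞β}. Then there exist constants C₂ > 0, K > 0 and δ > 0 such that |ρ_{α⊞β}(E) − C₂·|E − E₀|^{1/3}| ≤ K·|E − E₀|^{2/3} for all E with 0 < |E − E₀| < δ; i.e. ρ_{α⊞β} exhibits a two-sided cubic-root cusp at E₀. -/

import Mathlib

open MeasureTheory Complex Set Filter Topology

noncomputable section

/-- Cauchy–Stieltjes transform `m_μ(z) = ∫ (x − z)⁻¹ dμ(x)`. -/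
def mTr (μ : Measure ℝ) (z : ℂ) : ℂ := ∫ x, ((x : ℂ) - z)⁻¹ ∂μ

/-- Negative reciprocal Cauchy–Stieltjes transform `F_μ(z) = −1/m_μ(z)`. -/
def FTr (μ : Measure ℝ) (z : ℂ) : ℂ := -(mTr μ z)⁻¹

/-- `I_ν(ω) = ∫ |x − ω|⁻² dν(x)`. -/
def Inu (ν : Measure ℝ) (ω : ℂ) : ℝ := ∫ x, (Complex.normSq ((x : ℂ) - ω))⁻¹ ∂ν

/-- Topological support of a Borel measure on ℝ. -/
def msupport (μ : Measure ℝ) : Set ℝ := {x | ∀ U : Set ℝ, IsOpen U → x ∈ U → 0 < μ U}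

/-- `μh` is a Nevanlinna measure for the (centered) measure `μ`:
a finite Borel measure with `F_μ(ω) − ω = ∫ (x − ω)⁻¹ dμh(x)` on ℂ⁺. -/
def IsNevanlinna (μ μh : Measure ℝ) : Prop :=
  IsFiniteMeasure μh ∧ ∀ ω : ℂ, 0 < ω.im → FTr μ ω - ω = ∫ x, ((x : ℂ) - ω)⁻¹ ∂μh

/-- Subordination function for `μ` at time `t`. -/
structure IsSubordination (μ : Measure ℝ) (t : ℝ) (ω : ℂ → ℂ) : Prop where
  contOn : ContinuousOn ω {z : ℂ | 0 ≤ z.im}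
  mapsTo : ∀ z : ℂ, 0 ≤ z.im → 0 ≤ (ω z).im
  diff : DifferentiableOn ℂ ω {z : ℂ | 0 < z.im}
  im_ge : ∀ z : ℂ, 0 < z.im → z.im ≤ (ω z).im
  subord : ∀ z : ℂ, 0 < z.im → (t : ℂ) * ω z - z = ((t - 1 : ℝ) : ℂ) * FTr μ (ω z)

/-- `ν = μ^{⊞t}`, the free convolution power associated with the subordination function `ω`. -/
def IsFreePower (μ : Measure ℝ) (t : ℝ) (ω : ℂ → ℂ) (ν : Measure ℝ) : Prop :=
  IsProbabilityMeasure ν ∧ ∀ z : ℂ, 0 < z.im → mTr ν z = mTr μ (ω z)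

/-- Subordination functions for the pair `(μa, μb)`. -/
structure IsPairSubordination (μa μb : Measure ℝ) (ωa ωb : ℂ → ℂ) : Prop where
  diff_a : DifferentiableOn ℂ ωa {z : ℂ | 0 < z.im}
  diff_b : DifferentiableOn ℂ ωb {z : ℂ | 0 < z.im}
  im_a : ∀ z : ℂ, 0 < z.im → z.im ≤ (ωa z).im
  im_b : ∀ z : ℂ, 0 < z.im → z.im ≤ (ωb z).im
  lim_a : Tendsto (fun η : ℝ => ωa (η * Complex.I) / (η * Complex.I)) atTop (nhds 1)
  lim_b : Tendsto (fun η : ℝ => ωb (η * Complex.I) / (η * Complex.I)) atTop (nhds 1)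
  eq_a : ∀ z : ℂ, 0 < z.im → ωa z + ωb z - z = FTr μa (ωb z)
  eq_b : ∀ z : ℂ, 0 < z.im → ωa z + ωb z - z = FTr μb (ωa z)

/-- `ν = μa ⊞ μb`, the free additive convolution. -/
def IsFreeConv (μa μb : Measure ℝ) (ωb : ℂ → ℂ) (ν : Measure ℝ) : Prop :=
  IsProbabilityMeasure ν ∧ ∀ z : ℂ, 0 < z.im → mTr ν z = mTr μa (ωb z)

/-- Assumption 1 of the paper: `μ` is a centered, compactly supported probability
measure whose singular part consists of finitely many atoms and whose absolutely
continuous part has a density `ρ` of Jacobi type, supported on finitely many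
disjoint compact intervals with power-law behavior (exponents in `(−1,1)`). -/
structure JacobiData (μ : Measure ℝ) where
  ρ : ℝ → ℝ
  n : ℕ
  npos : 0 < n
  Em : Fin n → ℝ
  Ep : Fin n → ℝ
  βm : Fin n → ℝ
  βp : Fin n → ℝ
  Cj : Fin n → ℝ
  atoms : Finset ℝ
  w : ℝ → ℝ
  prob : IsProbabilityMeasure μ
  compactSupp : ∃ K : Set ℝ, IsCompact K ∧ μ Kᶜ = 0
  centered : ∫ x, x ∂μ = 0
  lt : ∀ j, Em j < Ep j
  disj : ∀ i j, i ≠ j → Disjoint (Set.Icc (Em i) (Ep i)) (Set.Icc (Em j) (Ep j))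
  βm_mem : ∀ j, βm j ∈ Set.Ioo (-1 : ℝ) 1
  βp_mem : ∀ j, βp j ∈ Set.Ioo (-1 : ℝ) 1
  Cj_ge : ∀ j, 1 ≤ Cj j
  ρ_nonneg : ∀ x, 0 ≤ ρ x
  ρ_supp : ∀ x, x ∉ ⋃ j, Set.Icc (Em j) (Ep j) → ρ x = 0
  powerLaw : ∀ j, ∀ᵐ E ∂(volume.restrict (Set.Icc (Em j) (Ep j))),
      (Cj j)⁻¹ * ((E - Em j) ^ (βm j) * (Ep j - E) ^ (βp j)) ≤ ρ E ∧
      ρ E ≤ Cj j * ((E - Em j) ^ (βm j) * (Ep j - E) ^ (βp j))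
  w_nonneg : ∀ a, 0 ≤ w a
  decomp : μ = volume.withDensity (fun x => ENNReal.ofReal (ρ x))
      + ∑ a ∈ atoms, ENNReal.ofReal (w a) • Measure.dirac a

/-- The support of the absolutely continuous part of `μ`. -/
def JacobiData.acSupport {μ : Measure ℝ} (d : JacobiData μ) : Set ℝ :=
  ⋃ j, Set.Icc (d.Em j) (d.Ep j)

/-- The Hölder condition (5.1)/(2.8) of the paper on the density of `μ_ac`. -/
def JacobiData.HolderCond {μ : Measure ℝ} (d : JacobiData μ) : Prop :=
  ∀ j, ∃ L γ : NNReal, 0 < γ ∧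
    HolderOnWith L γ
      (fun E => d.ρ E / ((E - d.Em j) ^ (d.βm j) * (d.Ep j - E) ^ (d.βp j)))
      (Set.Icc (d.Em j) (d.Ep j))

/-- Assumption 2 of the paper: a centered, absolutely continuous probability measure
supported on finitely many disjoint compact intervals, with density of Jacobi type. -/
structure AbsJacobiData (μ : Measure ℝ) where
  ρ : ℝ → ℝ
  n : ℕ
  npos : 0 < n
  Am : Fin n → ℝ
  Ap : Fin n → ℝ
  sm : Fin n → ℝ
  sp : Fin n → ℝ
  Cj : Fin n → ℝ
  prob : IsProbabilityMeasure μ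
  centered : ∫ x, x ∂μ = 0
  lt : ∀ j, Am j < Ap j
  disj : ∀ i j, i ≠ j → Disjoint (Set.Icc (Am i) (Ap i)) (Set.Icc (Am j) (Ap j))
  sm_mem : ∀ j, sm j ∈ Set.Ioo (-1 : ℝ) 1
  sp_mem : ∀ j, sp j ∈ Set.Ioo (-1 : ℝ) 1
  Cj_ge : ∀ j, 1 ≤ Cj j
  ρ_nonneg : ∀ x, 0 ≤ ρ x
  ρ_supp : ∀ x, x ∉ ⋃ j, Set.Icc (Am j) (Ap j) → ρ x = 0
  powerLaw : ∀ j, ∀ᵐ E ∂(volume.restrict (Set.Icc (Am j) (Ap j))),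
      (Cj j)⁻¹ * ((E - Am j) ^ (sm j) * (Ap j - E) ^ (sp j)) ≤ ρ E ∧
      ρ E ≤ Cj j * ((E - Am j) ^ (sm j) * (Ap j - E) ^ (sp j))
  decomp : μ = volume.withDensity (fun x => ENNReal.ofReal (ρ x))



/-- sign lemma -/
lemma im_sign_of_strictDeriv {h : ℂ → ℂ} {a m0 : ℝ} (ha : 0 < a)
    (hd : HasStrictDerivAt h (a : ℂ) (m0 : ℂ))
    (hr : ∀ᶠ x : ℝ in 𝓝 m0, (h x).im = 0) :
    ∀ᶠ m : ℂ in 𝓝 (m0 : ℂ), |(h m).im - a * m.im| ≤ a / 2 * |m.im| := by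
  have h1 := hd.isLittleO.def (half_pos ha)
  have hre : Tendsto (fun m : ℂ => m.re) (𝓝 (m0 : ℂ)) (𝓝 m0) := by
    have := Complex.continuous_re.tendsto (m0 : ℂ)
    simpa using this
  have hT : Tendsto (fun m : ℂ => (m, ((m.re : ℝ) : ℂ))) (𝓝 (m0 : ℂ)) (𝓝 ((m0 : ℂ), (m0 : ℂ))) := by
    apply Tendsto.prodMk_nhds tendsto_id
    exact (Complex.continuous_ofReal.tendsto m0).comp hre
  filter_upwards [hT.eventually h1, hre.eventually hr] with m h2 h3
  have h4 : m - ((m.re : ℝ) : ℂ) = (m.im : ℂ) * I := by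
    apply Complex.ext <;> simp
  simp only [ContinuousLinearMap.toSpanSingleton_apply, h4] at h2
  have h5 := (Complex.abs_im_le_norm _).trans h2
  simpa [h3, mul_comm] using h5

lemma normal_form {Z : ℂ → ℂ} {m0 E0 : ℝ} (hZ : AnalyticAt ℂ Z m0)
    (hr : ∀ᶠ x : ℝ in 𝓝 m0, (Z x).im = 0) (h0 : Z m0 = E0)
    (hne : ¬ ∀ᶠ m : ℂ in 𝓝 (m0 : ℂ), Z m = E0) :
    ∃ (k : ℕ) (σ : ℝ) (e : ℂ → ℂ) (a : ℝ), 1 ≤ k ∧ (σ = 1 ∨ σ = -1) ∧ 0 < a ∧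
      AnalyticAt ℂ e m0 ∧ e m0 = a ∧ (∀ᶠ x : ℝ in 𝓝 m0, (e x).im = 0) ∧
      ∀ᶠ m : ℂ in 𝓝 (m0 : ℂ), Z m = E0 + σ * ((m - m0) * e m) ^ k := by
  have hf : AnalyticAt ℂ (fun m => Z m - E0) m0 := hZ.sub analyticAt_const
  have hne' : ¬ ∀ᶠ m : ℂ in 𝓝 (m0 : ℂ), Z m - E0 = 0 := by
    simpa [sub_eq_zero] using hne
  obtain ⟨k, g, hg, hg0, hgeq⟩ := hf.exists_eventuallyEq_pow_smul_nonzero_iff.mpr hne'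
  have hof : Tendsto (fun x : ℝ => (x : ℂ)) (𝓝 m0) (𝓝 (m0 : ℂ)) :=
    Complex.continuous_ofReal.tendsto m0
  have hk : 1 ≤ k := by
    by_contra hk
    have hk : k = 0 := by omega
    have := hgeq.self_of_nhds
    simp [hk, h0] at this
    exact hg0 this.symm
  have hgr : ∀ᶠ x : ℝ in 𝓝[≠] m0, (g x).im = 0 := by
    filter_upwards [hr.filter_mono nhdsWithin_le_nhds,
      (hof.eventually hgeq).filter_mono nhdsWithin_le_nhds, self_mem_nhdsWithin] with x h1 h2 h3
    have h4 : (((x - m0) ^ k : ℝ) : ℂ) * g x = Z x - E0 := by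
      rw [h2]; push_cast; simp
    have h5 := congrArg Complex.im h4
    rw [Complex.im_ofReal_mul] at h5
    simp only [Complex.sub_im, h1, Complex.ofReal_im, sub_zero] at h5
    rcases mul_eq_zero.mp h5 with h6 | h6
    · exact absurd (sub_eq_zero.mp (pow_eq_zero_iff (by omega) |>.mp h6)) h3
    · exact h6
  have hgim : Tendsto (fun x : ℝ => (g x).im) (𝓝 m0) (𝓝 (g m0).im) :=
    (Complex.continuous_im.tendsto _).comp (hg.continuousAt.tendsto.comp hof)
  have hc0 : (g m0).im = 0 := by
    refine tendsto_nhds_unique_of_eventuallyEq (l := 𝓝[≠] m0)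
      (hgim.mono_left nhdsWithin_le_nhds) tendsto_const_nhds hgr
  have hgr' : ∀ᶠ x : ℝ in 𝓝 m0, (g x).im = 0 := by
    rw [eventually_nhdsWithin_iff] at hgr
    filter_upwards [hgr] with x hx
    by_cases hxm : x = m0
    · rw [hxm]; exact hc0
    · exact hx hxm
  have hcre : (g m0).re ≠ 0 := by
    intro h
    exact hg0 (Complex.ext h hc0)
  obtain ⟨σ, hσ, hσc⟩ : ∃ σ : ℝ, (σ = 1 ∨ σ = -1) ∧ 0 < σ * (g m0).re := by
    rcases lt_or_gt_of_ne hcre with h | h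
    · exact ⟨-1, Or.inr rfl, by linarith⟩
    · exact ⟨1, Or.inl rfl, by linarith⟩
  have hσ2 : (σ : ℂ) * σ = 1 := by
    rcases hσ with h | h <;> simp [h]
  have hk0 : (k : ℂ) ≠ 0 := by
    exact_mod_cast (by omega : k ≠ 0)
  have hslit : (σ : ℂ) * g m0 ∈ slitPlane := by
    left; rw [Complex.re_ofReal_mul]; exact hσc
  have han : AnalyticAt ℂ (fun m => Complex.log ((σ : ℂ) * g m)) m0 :=
    (analyticAt_const.mul hg).clog hslit
  refine ⟨k, σ, fun m => Complex.exp (Complex.log ((σ : ℂ) * g m) / k),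
    Real.exp (Real.log (σ * (g m0).re) / k), hk, hσ, Real.exp_pos _, ?_, ?_, ?_, ?_⟩
  · exact (han.div analyticAt_const hk0).cexp
  · have : (σ : ℂ) * g m0 = ((σ * (g m0).re : ℝ) : ℂ) := by
      apply Complex.ext <;> simp [hc0]
    simp only [this]
    rw [← Complex.ofReal_log hσc.le]
    push_cast; rfl
  · have hgre : Tendsto (fun x : ℝ => σ * (g x).re) (𝓝 m0) (𝓝 (σ * (g m0).re)) :=
      ((Complex.continuous_re.tendsto _).comp (hg.continuousAt.tendsto.comp hof)).const_mul σ
    filter_upwards [hgr', hgre.eventually (lt_mem_nhds hσc)] with x h1 h2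
    have : (σ : ℂ) * g x = ((σ * (g x).re : ℝ) : ℂ) := by
      apply Complex.ext <;> simp [h1]
    rw [this, ← Complex.ofReal_log h2.le]
    rw [← Complex.ofReal_natCast, ← Complex.ofReal_div, ← Complex.ofReal_exp, Complex.ofReal_im]
  · have : ∀ᶠ m in 𝓝 (m0 : ℂ), g m ≠ 0 := hg.continuousAt.eventually_ne hg0
    filter_upwards [hgeq, this] with m h1 h2
    have hσ0 : (σ : ℂ) ≠ 0 := left_ne_zero_of_mul_eq_one hσ2
    rw [mul_pow, ← Complex.exp_nat_mul, mul_div_cancel₀ _ hk0, Complex.exp_log (mul_ne_zero hσ0 h2)]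
    rw [smul_eq_mul] at h1
    linear_combination h1 - (m - m0) ^ k * g m * hσ2



lemma upper_neBot (E0 : ℝ) : (𝓝[{z : ℂ | 0 < z.im}] (E0 : ℂ)).NeBot := by
  rw [← mem_closure_iff_nhdsWithin_neBot, Complex.closure_setOfPred_lt_im]
  simp

/-- two distinct preimages in sectors -/
lemma two_directions {k : ℕ} {σ : ℝ} (h : (σ = 1 ∧ 3 ≤ k) ∨ (σ = -1 ∧ 4 ≤ k)) :
    ∃ p q : ℂ, p ≠ q ∧ 0 < p.im ∧ 0 < q.im ∧ p ^ k = q ^ k ∧ 0 < ((σ : ℂ) * p ^ k).im := by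
  have hk : 3 ≤ k := by rcases h with h | h <;> omega
  have hkR : (3 : ℝ) ≤ k := by exact_mod_cast hk
  have hk0 : (0 : ℝ) < k := by linarith
  have hk0' : (k : ℂ) ≠ 0 := by exact_mod_cast hk0.ne'
  obtain ⟨c, hc, hc2, hcs⟩ : ∃ c : ℝ, 0 < c ∧ c + 2 * Real.pi < k * Real.pi ∧ 0 < σ * Real.sin c := by
    rcases h with ⟨h1, h2⟩ | ⟨h1, h2⟩
    · refine ⟨Real.pi / 2, by positivity, by nlinarith [Real.pi_pos], by simp [h1]⟩
    · have : (4 : ℝ) ≤ k := by exact_mod_cast h2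
      refine ⟨Real.pi / 2 + Real.pi, by positivity, by nlinarith [Real.pi_pos], ?_⟩
      rw [Real.sin_add_pi]; simp [h1]
  have him : ∀ θ : ℝ, (Complex.exp (θ * I)).im = Real.sin θ := fun θ => by
    rw [Complex.exp_ofReal_mul_I_im]
  have hpw : ∀ θ : ℝ, (Complex.exp (((θ / k : ℝ) : ℂ) * I)) ^ k = Complex.exp (θ * I) := fun θ => by
    rw [← Complex.exp_nat_mul]; congr 1; push_cast; field_simp
  have hpp := Real.pi_pos
  have hs1 : 0 < Real.sin (c / k) := Real.sin_pos_of_pos_of_lt_pi (by positivity)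
    (by rw [div_lt_iff₀ hk0]; nlinarith)
  have hs2 : 0 < Real.sin ((c + 2 * Real.pi) / k) := Real.sin_pos_of_pos_of_lt_pi (by positivity)
    (by rw [div_lt_iff₀ hk0]; nlinarith)
  refine ⟨Complex.exp (((c / k : ℝ) : ℂ) * I), Complex.exp ((((c + 2 * Real.pi) / k : ℝ) : ℂ) * I),
    ?_, ?_, ?_, ?_, ?_⟩
  · intro heq
    have h1 := congrArg Complex.re heq
    rw [Complex.exp_ofReal_mul_I_re, Complex.exp_ofReal_mul_I_re] at h1
    have h2 := Real.injOn_cos ⟨by positivity, by rw [div_le_iff₀ hk0]; nlinarith⟩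
      ⟨by positivity, by rw [div_le_iff₀ hk0]; nlinarith⟩ h1
    rw [div_left_inj' hk0.ne'] at h2
    linarith
  · rw [him]; exact hs1
  · rw [him]; exact hs2
  · rw [hpw, hpw]
    push_cast
    rw [add_mul, Complex.exp_add, Complex.exp_two_pi_mul_I, mul_one]
  · rw [hpw, Complex.im_ofReal_mul, him]; exact hcs

lemma local_cusp {Z n : ℂ → ℂ} {m0 E0 : ℝ} {ρ : ℝ → ℝ} (hZ : AnalyticAt ℂ Z m0)
    (hr : ∀ᶠ x : ℝ in 𝓝 m0, (Z x).im = 0)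
    (hn : Tendsto n (𝓝[{z : ℂ | 0 < z.im}] (E0 : ℂ)) (𝓝 (m0 : ℂ)))
    (hnZ : ∀ᶠ z in 𝓝[{z : ℂ | 0 < z.im}] (E0 : ℂ), Z (n z) = z ∧ 0 < (n z).im)
    (hinj : ∃ r > 0, ∀ m1 ∈ Metric.ball (m0 : ℂ) r, ∀ m2 ∈ Metric.ball (m0 : ℂ) r,
      0 < m1.im → 0 < m2.im → Z m1 = Z m2 → 0 < (Z m1).im → m1 = m2)
    (hρ : ∀ E : ℝ, Tendsto (fun η : ℝ => (n (E + η * I)).im) (𝓝[>] 0) (𝓝 (Real.pi * ρ E)))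
    (hnv : ∀ δ > 0, (∃ E, E0 < E ∧ E < E0 + δ ∧ ρ E ≠ 0) ∧ (∃ E, E0 - δ < E ∧ E < E0 ∧ ρ E ≠ 0)) :
    ∃ C2 > (0 : ℝ), ∃ K > (0 : ℝ), ∃ δ > (0 : ℝ),
      ∀ E : ℝ, 0 < |E - E0| → |E - E0| < δ →
        |ρ E - C2 * |E - E0| ^ ((1 : ℝ) / 3)| ≤ K * |E - E0| ^ ((2 : ℝ) / 3) := by
  have := upper_neBot E0
  have h0 : Z m0 = E0 := by
    have h1 : Tendsto (fun z => Z (n z)) (𝓝[{z : ℂ | 0 < z.im}] (E0 : ℂ)) (𝓝 (Z m0)) :=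
      hZ.continuousAt.tendsto.comp hn
    exact tendsto_nhds_unique_of_eventuallyEq h1
      (tendsto_id.mono_left nhdsWithin_le_nhds) (hnZ.mono fun z hz => hz.1)
  have hne : ¬ ∀ᶠ m : ℂ in 𝓝 (m0 : ℂ), Z m = E0 := by
    intro h
    obtain ⟨z, ⟨hz1, hz2⟩, hz3, hz4⟩ := ((hnZ.and ((hn.eventually h).and
      (self_mem_nhdsWithin : {z : ℂ | 0 < z.im} ∈ 𝓝[{z : ℂ | 0 < z.im}] (E0 : ℂ)))).exists)
    rw [hz1] at hz3
    simp [hz3] at hz4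
  obtain ⟨k, σ, e, a, hk, hσ, ha, he, hea, her, hZe⟩ := normal_form hZ hr h0 hne
  set h : ℂ → ℂ := fun m => (m - m0) * e m with hdef
  have hhan : AnalyticAt ℂ h m0 := (analyticAt_id.sub analyticAt_const).mul he
  have hderiv : HasStrictDerivAt h (a : ℂ) (m0 : ℂ) := by
    have h1 := HasStrictDerivAt.fun_mul ((hasStrictDerivAt_id (m0 : ℂ)).sub_const (m0 : ℂ)) he.hasStrictDerivAt
    simpa [hea] using h1
  have hhr : ∀ᶠ x : ℝ in 𝓝 m0, (h x).im = 0 := by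
    filter_upwards [her] with x hx
    simp only [hdef, ← Complex.ofReal_sub, Complex.im_ofReal_mul, hx, mul_zero]
  have hsign := im_sign_of_strictDeriv ha hderiv hhr
  have hh0 : h m0 = 0 := by simp [hdef]
  have hcase : ¬ ((σ = 1 ∧ 3 ≤ k) ∨ (σ = -1 ∧ 4 ≤ k)) := by
    intro hc
    obtain ⟨p, q, hpq, hp, hq, hpk, hpp⟩ := two_directions hc
    obtain ⟨r, hr0, hinj⟩ := hinj
    have hmap := hderiv.map_nhds_eq (by exact_mod_cast ha.ne')
    rw [hh0] at hmap
    have hgood : ∀ᶠ w in 𝓝 (0 : ℂ), ∃ m, h m = w ∧ m ∈ Metric.ball (m0 : ℂ) r ∧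
        |(h m).im - a * m.im| ≤ a / 2 * |m.im| ∧ Z m = E0 + σ * (h m) ^ k := by
      rw [← hmap, eventually_map]
      filter_upwards [hsign, hZe, Metric.ball_mem_nhds (m0 : ℂ) hr0] with m h1 h2 h3
      exact ⟨m, rfl, h3, h1, h2⟩
    have hsc : ∀ p : ℂ, Tendsto (fun t : ℝ => (t : ℂ) * p) (𝓝[>] 0) (𝓝 0) := by
      intro p
      have : Tendsto (fun t : ℝ => (t : ℂ) * p) (𝓝 0) (𝓝 (((0 : ℝ) : ℂ) * p)) :=
        (Continuous.tendsto (by fun_prop) 0)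
      simpa using this.mono_left nhdsWithin_le_nhds
    obtain ⟨t, ⟨m1, hm1, hb1, hs1, hz1⟩, ⟨m2, hm2, hb2, hs2, hz2⟩, ht⟩ :=
      (((hsc p).eventually hgood).and (((hsc q).eventually hgood).and self_mem_nhdsWithin)).exists
    have ht : 0 < t := ht
    have himpos : ∀ m w : ℂ, 0 < w.im → h m = t * w → |(h m).im - a * m.im| ≤ a / 2 * |m.im| →
        0 < m.im := by
      intro m w hw h1 h2
      rw [h1, Complex.im_ofReal_mul] at h2
      by_contra hcon
      push Not at hcon
      rw [abs_of_nonpos hcon] at h2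
      have := le_abs_self (t * w.im - a * m.im)
      nlinarith [mul_pos ht hw]
    have hzeq : Z m1 = Z m2 := by
      rw [hz1, hz2, hm1, hm2, mul_pow, mul_pow, hpk]
    have hzim : 0 < (Z m1).im := by
      rw [hz1, hm1, mul_pow]
      have : (E0 : ℂ) + σ * ((t : ℂ) ^ k * p ^ k) = E0 + ((t ^ k : ℝ) : ℂ) * (σ * p ^ k) := by
        push_cast; ring
      rw [this, Complex.add_im, Complex.im_ofReal_mul]
      simp only [Complex.ofReal_im, zero_add]
      positivity
    have hmm := hinj m1 hb1 m2 hb2 (himpos _ _ hp hm1 hs1) (himpos _ _ hq hm2 hs2) hzeq hzim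
    rw [hmm, hm2] at hm1
    exact hpq ((mul_left_cancel₀ (by exact_mod_cast ht.ne') hm1).symm)
  have hest : ∃ K > 0, ∀ᶠ m in 𝓝 (m0 : ℂ), |m.im - (h m).im / a| ≤ K * ‖h m‖ ^ 2 := by
    have h1 : (fun m => e m - e m0) =O[𝓝 (m0 : ℂ)] fun m => m - (m0 : ℂ) :=
      he.differentiableAt.isBigO_sub
    obtain ⟨c, hc, h2⟩ := h1.exists_pos
    have h2 := h2.bound
    have h3 : ∀ᶠ m in 𝓝 (m0 : ℂ), a / 2 < ‖e m‖ := by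
      have : Tendsto (fun m => ‖e m‖) (𝓝 (m0 : ℂ)) (𝓝 a) := by
        have := he.continuousAt.norm.tendsto
        rw [hea] at this
        simpa [abs_of_pos ha] using this
      exact this.eventually (lt_mem_nhds (by linarith))
    refine ⟨c / a / (a / 2) ^ 2, by positivity, ?_⟩
    filter_upwards [h2, h3] with m h2 h3
    have h4 : m.im - (h m).im / a = - ((m - m0) * (e m - e m0)).im / a := by
      have : (m - m0) * (e m - e m0) = h m - a * (m - m0) := by
        simp only [hdef, hea]; ring
      rw [this, Complex.sub_im, Complex.im_ofReal_mul]
      simp only [Complex.sub_im, Complex.ofReal_im, sub_zero]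
      field_simp; ring
    have h5 : ‖m - m0‖ ≤ ‖h m‖ / (a / 2) := by
      rw [le_div_iff₀ (by positivity)]
      simp only [hdef, norm_mul]
      exact mul_le_mul_of_nonneg_left h3.le (norm_nonneg _)
    rw [h4, abs_div, abs_neg, abs_of_pos ha]
    calc |((m - m0) * (e m - e m0)).im| / a ≤ ‖(m - m0) * (e m - e m0)‖ / a := by
          gcongr; exact Complex.abs_im_le_norm _
      _ ≤ (‖m - m0‖ * (c * ‖m - m0‖)) / a := by rw [norm_mul]; gcongr
      _ = c / a * ‖m - m0‖ ^ 2 := by ring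
      _ ≤ c / a * (‖h m‖ / (a / 2)) ^ 2 := by gcongr
      _ = _ := by rw [div_pow]; ring
  obtain ⟨K, hK, hest⟩ := hest
  have hall : ∀ᶠ m in 𝓝 (m0 : ℂ), |m.im - (h m).im / a| ≤ K * ‖h m‖ ^ 2 ∧
      |(h m).im - a * m.im| ≤ a / 2 * |m.im| ∧ Z m = E0 + σ * (h m) ^ k ∧
      ContinuousAt Z m ∧ ContinuousAt h m := by
    filter_upwards [hest, hsign, hZe, hZ.eventually_analyticAt, hhan.eventually_analyticAt]
      with m h1 h2 h3 h4 h5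
    exact ⟨h1, h2, h3, h4.continuousAt, h5.continuousAt⟩
  obtain ⟨r, hr0, hall⟩ := Metric.nhds_basis_closedBall.eventually_iff.mp hall
  obtain ⟨δ, hδ, hnδ⟩ : ∃ δ > 0, ∀ z : ℂ, 0 < z.im → ‖z - E0‖ < δ →
      n z ∈ Metric.closedBall (m0 : ℂ) r ∧ Z (n z) = z ∧ 0 < (n z).im := by
    have h1 := (hn.eventually (Metric.closedBall_mem_nhds (m0 : ℂ) hr0)).and hnZ
    rw [eventually_nhdsWithin_iff, Metric.eventually_nhds_iff] at h1
    obtain ⟨δ, hδ, h1⟩ := h1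
    exact ⟨δ, hδ, fun z hz hzd => h1 (by rwa [dist_eq_norm]) hz⟩
  have hlim : ∀ E : ℝ, |E - E0| < δ → ∃ ms : ℂ, ∃ s : ℕ → ℂ, ms ∈ Metric.closedBall (m0 : ℂ) r ∧
      ms.im = Real.pi * ρ E ∧ Z ms = E ∧ Tendsto s atTop (𝓝 ms) ∧
      ∀ j, s j ∈ Metric.closedBall (m0 : ℂ) r ∧ 0 < (s j).im ∧ 0 < (Z (s j)).im := by
    intro E hE
    set η : ℕ → ℝ := fun j => (δ - |E - E0|) / 2 * (1 / ((j : ℝ) + 1)) with hη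
    have hηpos : ∀ j, 0 < η j := fun j => by
      have : 0 < δ - |E - E0| := by linarith
      simp only [hη]; positivity
    have hηt : Tendsto η atTop (𝓝 0) := by
      have := (tendsto_one_div_add_atTop_nhds_zero_nat (𝕜 := ℝ)).const_mul ((δ - |E - E0|) / 2)
      simpa [hη] using this
    have hηt' : Tendsto η atTop (𝓝[>] 0) :=
      tendsto_nhdsWithin_iff.mpr ⟨hηt, Eventually.of_forall hηpos⟩
    have hz : ∀ j, 0 < ((E : ℂ) + η j * I).im ∧ ‖(E : ℂ) + η j * I - E0‖ < δ := by
      intro j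
      refine ⟨by simpa using hηpos j, ?_⟩
      have h1 : (E : ℂ) + η j * I - E0 = ((E - E0 : ℝ) : ℂ) + η j * I := by push_cast; ring
      rw [h1]
      refine (norm_add_le _ _).trans_lt ?_
      rw [norm_mul, Complex.norm_real, Complex.norm_real, Complex.norm_I, mul_one, Real.norm_eq_abs,
        Real.norm_eq_abs, abs_of_pos (hηpos j)]
      have h2 : 1 / ((j : ℝ) + 1) ≤ 1 := by
        rw [div_le_one (by positivity)]; linarith [Nat.cast_nonneg (α := ℝ) j]
      have h3 : η j ≤ (δ - |E - E0|) / 2 := by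
        simp only [hη]
        exact mul_le_of_le_one_right (by linarith) h2
      linarith
    obtain ⟨ms, hms, φ, hφ, hlim⟩ := (isCompact_closedBall (m0 : ℂ) r).tendsto_subseq
      (fun j => (hnδ _ (hz j).1 (hz j).2).1)
    refine ⟨ms, _, hms, ?_, ?_, hlim, ?_⟩
    · have h1 := (Complex.continuous_im.tendsto ms).comp hlim
      have h2 := (hρ E).comp (hηt'.comp hφ.tendsto_atTop)
      exact tendsto_nhds_unique h1 h2
    · have h1 := ((hall hms).2.2.2.1).tendsto.comp hlim
      have h2 : Tendsto (fun j => (E : ℂ) + η (φ j) * I) atTop (𝓝 ((E : ℂ) + ((0 : ℝ) : ℂ) * I)) := by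
        apply Tendsto.const_add
        apply Tendsto.mul_const
        exact (Complex.continuous_ofReal.tendsto 0).comp (hηt.comp hφ.tendsto_atTop)
      have h3 : (Z ∘ ((fun j => n ((E : ℂ) + η j * I)) ∘ φ)) = fun j => (E : ℂ) + η (φ j) * I := by
        funext j
        exact (hnδ _ (hz (φ j)).1 (hz (φ j)).2).2.1
      have h4 : Tendsto (fun j => (E : ℂ) + η (φ j) * I) atTop (𝓝 (Z ms)) := by
        rw [← h3]; exact h1
      have := tendsto_nhds_unique h4 h2
      simpa using this
    · intro j
      have h1 := hnδ _ (hz (φ j)).1 (hz (φ j)).2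
      refine ⟨h1.1, h1.2.2, ?_⟩
      simp only [Function.comp]
      rw [h1.2.1]
      exact (hz (φ j)).1
  have hhpos : ∀ m ∈ Metric.closedBall (m0 : ℂ) r, 0 < m.im → 0 < (h m).im := by
    intro m hm h1
    have h2 := (hall hm).2.1
    rw [abs_of_pos h1, abs_le] at h2
    nlinarith [mul_pos ha h1]
  by_cases hk2 : k ≤ 2
  · exfalso
    obtain ⟨E, hEδ, hsE, hρE⟩ : ∃ E, |E - E0| < δ ∧ 0 < σ * (E - E0) ∧ ρ E ≠ 0 := by
      rcases hσ with h1 | h1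
      · obtain ⟨E, h2, h3, h4⟩ := (hnv δ hδ).1
        exact ⟨E, by rw [abs_lt]; constructor <;> linarith, by rw [h1]; linarith, h4⟩
      · obtain ⟨E, h2, h3, h4⟩ := (hnv δ hδ).2
        exact ⟨E, by rw [abs_lt]; constructor <;> linarith, by rw [h1]; linarith, h4⟩
    obtain ⟨ms, s, hms, hmρ, hmZ, -, -⟩ := hlim E hEδ
    obtain ⟨-, hs, hz, -, -⟩ := hall hms
    rw [hmZ] at hz
    have hσ2 : (σ : ℂ) * σ = 1 := by rcases hσ with h | h <;> simp [h]
    have hpow : (h ms) ^ k = ((σ * (E - E0) : ℝ) : ℂ) := by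
      push_cast
      linear_combination (-(σ : ℂ)) * hz - (h ms) ^ k * hσ2
    have him : (h ms).im = 0 := by
      interval_cases k
      · rw [pow_one] at hpow
        rw [hpow, Complex.ofReal_im]
      · have h1 := congrArg Complex.re hpow
        have h2 := congrArg Complex.im hpow
        rw [pow_two] at h1 h2
        simp only [Complex.mul_re, Complex.mul_im, Complex.ofReal_re, Complex.ofReal_im] at h1 h2
        by_contra hcon
        have h3 : (h ms).re = 0 := by
          have : (h ms).im * (h ms).re = 0 := by linarith
          exact (mul_eq_zero.mp this).resolve_left hcon
        rw [h3] at h1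
        nlinarith [mul_self_nonneg (h ms).im]
    rw [him, zero_sub, abs_neg, abs_mul, abs_of_pos ha] at hs
    have h3 : ms.im = 0 := by
      rw [← abs_eq_zero]
      nlinarith [abs_nonneg ms.im]
    rw [h3] at hmρ
    exact hρE ((mul_eq_zero.mp hmρ.symm).resolve_left Real.pi_ne_zero)
  have hkσ : k = 3 ∧ σ = -1 := by
    rcases hσ with h1 | h1
    · exact absurd (Or.inl ⟨h1, by omega⟩) hcase
    · refine ⟨?_, h1⟩
      by_contra hcon
      exact hcase (Or.inr ⟨h1, by omega⟩)
  obtain ⟨hk3, hσ1⟩ := hkσ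
  subst hk3 hσ1
  have hpi := Real.pi_pos
  refine ⟨Real.sqrt 3 / 2 / a / Real.pi, by positivity, K / Real.pi, by positivity, δ, hδ, ?_⟩
  intro E hE0 hEδ
  obtain ⟨ms, s, hms, hmρ, hmZ, hst, hsj⟩ := hlim E hEδ
  obtain ⟨hq, hs, hz, hcZ, hch⟩ := hall hms
  have hht : Tendsto (fun j => h (s j)) atTop (𝓝 (h ms)) := hch.tendsto.comp hst
  have hret : Tendsto (fun j => (h (s j)).re) atTop (𝓝 (h ms).re) :=
    (Complex.continuous_re.tendsto _).comp hht
  have himt : Tendsto (fun j => (h (s j)).im) atTop (𝓝 (h ms).im) :=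
    (Complex.continuous_im.tendsto _).comp hht
  have hβ : 0 ≤ (h ms).im := ge_of_tendsto' himt fun j => (hhpos _ (hsj j).1 (hsj j).2.1).le
  have hαβ : 3 * (h ms).re ^ 2 ≤ (h ms).im ^ 2 := by
    refine le_of_tendsto_of_tendsto' ((hret.pow 2).const_mul 3) (himt.pow 2) fun j => ?_
    have h1 := (hsj j).2.2
    rw [(hall (hsj j).1).2.2.1] at h1
    have h2 := hhpos _ (hsj j).1 (hsj j).2.1
    simp only [pow_succ, pow_zero, one_mul, Complex.add_im, Complex.mul_im, Complex.mul_re,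
      Complex.ofReal_im, Complex.ofReal_re] at h1
    by_contra hcon
    push Not at hcon
    nlinarith [mul_pos h2 (sub_pos.mpr hcon)]
  rw [hmZ] at hz
  have hre := congrArg Complex.re hz
  have him := congrArg Complex.im hz
  simp only [pow_succ, pow_zero, one_mul, Complex.add_im, Complex.mul_im, Complex.mul_re,
    Complex.add_re, Complex.ofReal_im, Complex.ofReal_re] at hre him
  generalize hA : (h ms).re = α at *
  generalize hB : (h ms).im = β at *
  have hb2 : β ^ 2 = 3 * α ^ 2 := by
    rcases mul_eq_zero.mp (show β * (β ^ 2 - 3 * α ^ 2) = 0 by linarith) with h1 | h1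
    · rw [h1] at hαβ ⊢
      nlinarith [sq_nonneg α]
    · linarith
  have hx : E - E0 = 8 * α ^ 3 := by
    have : E - E0 = 3 * α * β ^ 2 - α ^ 3 := by linarith
    rw [this, hb2]; ring
  have hxabs : |E - E0| = (2 * |α|) ^ 3 := by
    rw [hx, abs_mul, abs_pow, mul_pow]; norm_num
  have h13 : |E - E0| ^ ((1 : ℝ) / 3) = 2 * |α| := by
    rw [hxabs, ← Real.rpow_natCast, ← Real.rpow_mul (by positivity)]; norm_num
  have h23 : |E - E0| ^ ((2 : ℝ) / 3) = (2 * |α|) ^ 2 := by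
    rw [hxabs, ← Real.rpow_natCast, ← Real.rpow_mul (by positivity), ← Real.rpow_natCast]; norm_num
  have hβ' : β = Real.sqrt 3 * |α| := by
    have : β = Real.sqrt (β ^ 2) := (Real.sqrt_sq hβ).symm
    rw [this, hb2, Real.sqrt_mul (by norm_num), Real.sqrt_sq_eq_abs]
  have hnorm : ‖h ms‖ ^ 2 = (2 * |α|) ^ 2 := by
    rw [← Complex.normSq_eq_norm_sq, Complex.normSq_apply, hA, hB, mul_pow, sq_abs]
    nlinarith
  rw [h13, h23, ← hnorm]
  have hρ' : ρ E = ms.im / Real.pi := by rw [hmρ]; field_simp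
  have : ρ E - Real.sqrt 3 / 2 / a / Real.pi * (2 * |α|) = (ms.im - β / a) / Real.pi := by
    rw [hρ', hβ']; ring
  rw [this, abs_div, abs_of_pos hpi, div_mul_eq_mul_div]
  gcongr



/-- The properties of the measures used in the proof. -/
structure Good (μ : Measure ℝ) (S : Set ℝ) : Prop where
  prob : IsProbabilityMeasure μ
  compact : IsCompact S
  null : μ Sᶜ = 0
  mean : ∫ x, x ∂μ = 0
  noat : ∀ x, μ {x} = 0
  blow : ∀ u0 ∈ S, Tendsto (fun r : ℝ => μ.real (Metric.closedBall u0 r) / r ^ 2) (𝓝[>] 0) atTop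

lemma int_fun_sub {μ : Measure ℝ} {E : Type*} [NormedAddCommGroup E] {f g : ℝ → E}
    (hf : Integrable f μ) (hg : Integrable g μ) : Integrable (fun x => f x - g x) μ := hf.sub hg

/-- Cauchy-Schwarz -/
lemma cs_real {μ : Measure ℝ} {f g : ℝ → ℝ} (hf : Integrable (fun x => f x ^ 2) μ)
    (hg : Integrable (fun x => g x ^ 2) μ) (hfg : Integrable (fun x => f x * g x) μ) :
    (∫ x, f x * g x ∂μ) ^ 2 ≤ (∫ x, f x ^ 2 ∂μ) * ∫ x, g x ^ 2 ∂μ := by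
  have h : ∀ t : ℝ, 0 ≤ (∫ x, f x ^ 2 ∂μ) * (t * t) + (2 * ∫ x, f x * g x ∂μ) * t
      + ∫ x, g x ^ 2 ∂μ := by
    intro t
    have h1 : 0 ≤ ∫ x, (f x * t + g x) ^ 2 ∂μ := integral_nonneg fun x => sq_nonneg _
    have h2 : ∫ x, (f x * t + g x) ^ 2 ∂μ = ∫ x, ((t * t) * f x ^ 2 + (2 * t) * (f x * g x))
        + g x ^ 2 ∂μ := by
      congr 1; funext x; ring
    rw [h2, integral_add ((hf.const_mul _).fun_add (hfg.const_mul _)) hg,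
      integral_add (hf.const_mul _) (hfg.const_mul _), integral_const_mul, integral_const_mul] at h1
    linarith
  have := discrim_le_zero h
  rw [discrim] at this
  nlinarith

namespace Good
variable {μ : Measure ℝ} {S : Set ℝ}

lemma ae_mem (h : Good μ S) : ∀ᵐ x ∂μ, x ∈ S := by
  rw [ae_iff]; exact h.null

lemma bdd (h : Good μ S) : ∃ L > 0, ∀ x ∈ S, |x| ≤ L := by
  obtain ⟨L, hL⟩ := h.compact.isBounded.exists_norm_le
  exact ⟨max L 1, by positivity, fun x hx => (hL x hx).trans (le_max_left _ _)⟩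

lemma isOpen_off (h : Good μ S) : IsOpen {z : ℂ | z ∉ Set.image ((↑) : ℝ → ℂ) S} :=
  (h.compact.image Complex.continuous_ofReal).isClosed.isOpen_compl

lemma off_of_im {z : ℂ} (hz : z.im ≠ 0) : z ∉ Set.image ((↑) : ℝ → ℂ) S := by
  rintro ⟨x, -, rfl⟩
  simp at hz

lemma away (h : Good μ S) {z : ℂ} (hz : z ∉ Set.image ((↑) : ℝ → ℂ) S) :
    ∃ ε > 0, ∀ x ∈ S, ∀ w ∈ Metric.ball z ε, ε ≤ ‖(x : ℂ) - w‖ := by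
  obtain ⟨ε, hε, hb⟩ := Metric.isOpen_iff.mp h.isOpen_off z hz
  refine ⟨ε / 2, by positivity, fun x hx w hw => ?_⟩
  by_contra hcon
  push Not at hcon
  refine hb (a := (x : ℂ)) ?_ ⟨x, hx, rfl⟩
  rw [Metric.mem_ball] at hw ⊢
  have := dist_triangle (x : ℂ) w z
  rw [dist_eq_norm (x : ℂ) w] at this
  linarith

lemma integrable_of (h : Good μ S) {E : Type*} [NormedAddCommGroup E] {f : ℝ → E}
    (hm : AEStronglyMeasurable f μ) {C : ℝ} (hC : ∀ x ∈ S, ‖f x‖ ≤ C) : Integrable f μ := by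
  have := h.prob
  exact Integrable.of_bound hm C (h.ae_mem.mono hC)

lemma meas_inv (z : ℂ) : Measurable (fun x : ℝ => ((x : ℂ) - z)⁻¹) := by fun_prop

lemma bound_inv (h : Good μ S) {z : ℂ} (hz : z ∉ Set.image ((↑) : ℝ → ℂ) S) :
    ∃ C, ∀ x ∈ S, ‖((x : ℂ) - z)⁻¹‖ ≤ C := by
  obtain ⟨ε, hε, hb⟩ := h.away hz
  refine ⟨ε⁻¹, fun x hx => ?_⟩
  rw [norm_inv]
  exact inv_anti₀ hε (hb x hx z (Metric.mem_ball_self hε))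

lemma int_inv (h : Good μ S) {z : ℂ} (hz : z ∉ Set.image ((↑) : ℝ → ℂ) S) :
    Integrable (fun x : ℝ => ((x : ℂ) - z)⁻¹) μ := by
  obtain ⟨C, hC⟩ := h.bound_inv hz
  exact h.integrable_of (meas_inv z).aestronglyMeasurable hC

lemma Inu_eq (z : ℂ) : Inu μ z = ∫ x : ℝ, ‖((x : ℂ) - z)⁻¹‖ ^ 2 ∂μ := by
  unfold Inu
  congr 1; funext x
  rw [norm_inv, inv_pow, Complex.normSq_eq_norm_sq]

lemma int_sq (h : Good μ S) {z : ℂ} (hz : z ∉ Set.image ((↑) : ℝ → ℂ) S) :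
    Integrable (fun x : ℝ => ‖((x : ℂ) - z)⁻¹‖ ^ 2) μ := by
  obtain ⟨C, hC⟩ := h.bound_inv hz
  refine h.integrable_of (C := C ^ 2) ((meas_inv z).norm.pow_const 2).aestronglyMeasurable ?_
  intro x hx
  rw [norm_pow, norm_norm]
  exact pow_le_pow_left₀ (norm_nonneg _) (hC x hx) 2

lemma mTr_im (h : Good μ S) {z : ℂ} (hz : z ∉ Set.image ((↑) : ℝ → ℂ) S) :
    (mTr μ z).im = z.im * Inu μ z := by
  unfold mTr Inu
  have h1 := integral_im (𝕜 := ℂ) (h.int_inv hz)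
  simp only [RCLike.im_to_complex] at h1
  rw [← h1, ← integral_const_mul]
  congr 1; funext x
  rw [Complex.inv_im]
  simp [div_eq_mul_inv]

lemma Inu_lower (h : Good μ S) {L : ℝ} (hL0 : 0 < L) (hL : ∀ x ∈ S, |x| ≤ L) {z : ℂ}
    (hz : z ∉ Set.image ((↑) : ℝ → ℂ) S) : ((L + ‖z‖) ^ 2)⁻¹ ≤ Inu μ z := by
  have := h.prob
  rw [Inu_eq]
  have h1 : ((L + ‖z‖) ^ 2)⁻¹ = ∫ x : ℝ, ((L + ‖z‖) ^ 2)⁻¹ ∂μ := by simp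
  rw [h1]
  refine integral_mono_ae (integrable_const _) (h.int_sq hz) ?_
  filter_upwards [h.ae_mem] with x hx
  have hne : (x : ℂ) - z ≠ 0 := fun h0 => hz ⟨x, hx, sub_eq_zero.mp h0⟩
  simp only [norm_inv, inv_pow]
  apply inv_anti₀ (by positivity)
  gcongr
  refine (norm_sub_le _ _).trans ?_
  rw [Complex.norm_real, Real.norm_eq_abs]
  linarith [hL x hx]

lemma Inu_pos (h : Good μ S) {z : ℂ} (hz : z ∉ Set.image ((↑) : ℝ → ℂ) S) : 0 < Inu μ z := by
  obtain ⟨L, hL0, hL⟩ := h.bdd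
  exact lt_of_lt_of_le (by positivity) (h.Inu_lower hL0 hL hz)

lemma mTr_ne (h : Good μ S) {z : ℂ} (hz : 0 < z.im) : mTr μ z ≠ 0 := by
  intro h0
  have h1 := h.mTr_im (off_of_im hz.ne')
  rw [h0] at h1
  have := mul_pos hz (h.Inu_pos (off_of_im hz.ne'))
  simp at h1
  rcases h1 with h1 | h1
  · exact hz.ne' h1
  · exact (h.Inu_pos (off_of_im hz.ne')).ne' h1

/-- the variance of the resolvent -/
def Vr (μ : Measure ℝ) (z : ℂ) : ℝ := ∫ x : ℝ, ‖((x : ℂ) - z)⁻¹ - mTr μ z‖ ^ 2 ∂μ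

lemma int_var (h : Good μ S) {z : ℂ} (hz : z ∉ Set.image ((↑) : ℝ → ℂ) S) :
    Integrable (fun x : ℝ => ‖((x : ℂ) - z)⁻¹ - mTr μ z‖ ^ 2) μ := by
  obtain ⟨C, hC⟩ := h.bound_inv hz
  refine h.integrable_of (C := (C + ‖mTr μ z‖) ^ 2)
    (((meas_inv z).sub_const _).norm.pow_const 2).aestronglyMeasurable ?_
  intro x hx
  rw [norm_pow, norm_norm]
  refine pow_le_pow_left₀ (norm_nonneg _) ((norm_sub_le _ _).trans ?_) 2
  linarith [hC x hx]

lemma Vr_eq (h : Good μ S) {z : ℂ} (hz : z ∉ Set.image ((↑) : ℝ → ℂ) S) :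
    Vr μ z = Inu μ z - ‖mTr μ z‖ ^ 2 := by
  have := h.prob
  rw [Inu_eq]
  unfold Vr
  set m := mTr μ z with hm
  have hre : Integrable (fun x : ℝ => (((x : ℂ) - z)⁻¹ * starRingEnd ℂ m).re) μ :=
    ((h.int_inv hz).mul_const _).re
  have h1 : ∀ x : ℝ, ‖((x : ℂ) - z)⁻¹ - m‖ ^ 2 =
      (‖((x : ℂ) - z)⁻¹‖ ^ 2 - 2 * (((x : ℂ) - z)⁻¹ * starRingEnd ℂ m).re) + ‖m‖ ^ 2 := by
    intro x
    rw [← Complex.normSq_eq_norm_sq, Complex.normSq_sub, Complex.normSq_eq_norm_sq,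
      Complex.normSq_eq_norm_sq]
    ring
  simp_rw [h1]
  rw [integral_add (int_fun_sub (h.int_sq hz) (hre.const_mul _)) (integrable_const _),
    integral_sub (h.int_sq hz) (hre.const_mul _), integral_const_mul]
  have h2 : ∫ x : ℝ, (((x : ℂ) - z)⁻¹ * starRingEnd ℂ m).re ∂μ = ‖m‖ ^ 2 := by
    have h3 := integral_re (𝕜 := ℂ) ((h.int_inv hz).mul_const (starRingEnd ℂ m))
    simp only [RCLike.re_to_complex] at h3
    rw [h3, integral_mul_const]
    have : ∫ x : ℝ, ((x : ℂ) - z)⁻¹ ∂μ = m := rfl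
    rw [this, Complex.mul_conj, Complex.ofReal_re, Complex.normSq_eq_norm_sq]
  rw [h2]
  simp
  ring

lemma int_pow (h : Good μ S) (k : ℕ) : Integrable (fun x : ℝ => x ^ k) μ := by
  obtain ⟨L, hL0, hL⟩ := h.bdd
  refine h.integrable_of (C := L ^ k) (by fun_prop) ?_
  intro x hx
  rw [norm_pow]
  exact pow_le_pow_left₀ (norm_nonneg _) (hL x hx) k

lemma var_pos (h : Good μ S) : 0 < ∫ x, x ^ 2 ∂μ := by
  have := h.prob
  refine lt_of_le_of_ne (integral_nonneg fun x => sq_nonneg x) fun h0 => ?_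
  have h1 := (integral_eq_zero_iff_of_nonneg (fun x : ℝ => sq_nonneg x) (h.int_pow 2)).mp h0.symm
  have h2 : ∀ᵐ x ∂μ, x = 0 := by
    filter_upwards [h1] with x hx
    simpa using hx
  have h3 : μ {0}ᶜ = 0 := by
    rw [ae_iff] at h2; exact h2
  have h4 : μ Set.univ ≤ μ {0} + μ {0}ᶜ := by
    rw [← Set.union_compl_self {(0 : ℝ)}]; exact measure_union_le _ _
  rw [h3, h.noat 0, measure_univ] at h4
  simp at h4

lemma Vr_lower (h : Good μ S) {L : ℝ} (hL0 : 0 < L) (hL : ∀ x ∈ S, |x| ≤ L) {z : ℂ}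
    (hz : z ∉ Set.image ((↑) : ℝ → ℂ) S) :
    ‖mTr μ z‖ ^ 2 * (∫ x, x ^ 2 ∂μ) / (L + ‖z‖) ^ 2 ≤ Vr μ z := by
  have := h.prob
  set m := mTr μ z with hm
  have hi1 : Integrable (fun x : ℝ => x) μ := by simpa using h.int_pow 1
  have key : ∀ x : ℝ, ‖1 - m * ((x : ℂ) - z)‖ ^ 2 =
      (‖1 + m * z‖ ^ 2 - 2 * ((1 + m * z) * starRingEnd ℂ m).re * x) + ‖m‖ ^ 2 * x ^ 2 := by
    intro x
    have : 1 - m * ((x : ℂ) - z) = (1 + m * z) - m * x := by ring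
    rw [this, ← Complex.normSq_eq_norm_sq, Complex.normSq_sub, Complex.normSq_eq_norm_sq,
      Complex.normSq_eq_norm_sq, norm_mul, mul_pow, Complex.norm_real, Real.norm_eq_abs, sq_abs,
      map_mul, Complex.conj_ofReal, ← mul_assoc, Complex.re_mul_ofReal]
    ring
  have hint : Integrable (fun x : ℝ => ‖1 - m * ((x : ℂ) - z)‖ ^ 2) μ := by
    simp_rw [key]
    exact ((integrable_const _).sub (hi1.const_mul _)).add ((h.int_pow 2).const_mul _)
  have h2 : ∫ x : ℝ, ‖1 - m * ((x : ℂ) - z)‖ ^ 2 ∂μ = ‖1 + m * z‖ ^ 2 + ‖m‖ ^ 2 * ∫ x, x ^ 2 ∂μ := by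
    simp_rw [key]
    rw [integral_add (int_fun_sub (integrable_const _) (hi1.const_mul _)) ((h.int_pow 2).const_mul _),
      integral_sub (integrable_const _) (hi1.const_mul _), integral_const_mul, integral_const_mul,
      h.mean]
    simp
  calc ‖m‖ ^ 2 * (∫ x, x ^ 2 ∂μ) / (L + ‖z‖) ^ 2
      ≤ (∫ x : ℝ, ‖1 - m * ((x : ℂ) - z)‖ ^ 2 ∂μ) / (L + ‖z‖) ^ 2 := by
        rw [h2]; gcongr; linarith [sq_nonneg ‖1 + m * z‖]
    _ = ∫ x : ℝ, ‖1 - m * ((x : ℂ) - z)‖ ^ 2 / (L + ‖z‖) ^ 2 ∂μ := by rw [integral_div]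
    _ ≤ Vr μ z := by
        refine integral_mono_ae (hint.div_const _) (h.int_var hz) ?_
        filter_upwards [h.ae_mem] with x hx
        have hne : (x : ℂ) - z ≠ 0 := fun h0 => hz ⟨x, hx, sub_eq_zero.mp h0⟩
        have h3 : ((x : ℂ) - z)⁻¹ - m = (1 - m * ((x : ℂ) - z)) / ((x : ℂ) - z) := by
          field_simp
        rw [← hm, h3, norm_div, div_pow]
        have : 0 < ‖(x : ℂ) - z‖ := norm_pos_iff.mpr hne
        gcongr
        refine (norm_sub_le _ _).trans ?_
        rw [Complex.norm_real, Real.norm_eq_abs]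
        linarith [hL x hx]

/-- covariance kernel -/
def Kr (μ : Measure ℝ) (z w : ℂ) : ℂ := ∫ x : ℝ, ((x : ℂ) - z)⁻¹ * ((x : ℂ) - w)⁻¹ ∂μ

lemma int_prod (h : Good μ S) {z w : ℂ} (hz : z ∉ Set.image ((↑) : ℝ → ℂ) S)
    (hw : w ∉ Set.image ((↑) : ℝ → ℂ) S) :
    Integrable (fun x : ℝ => ((x : ℂ) - z)⁻¹ * ((x : ℂ) - w)⁻¹) μ := by
  obtain ⟨C, hC⟩ := h.bound_inv hz
  obtain ⟨D, hD⟩ := h.bound_inv hw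
  refine h.integrable_of (C := C * D) ((meas_inv z).mul (meas_inv w)).aestronglyMeasurable ?_
  intro x hx
  rw [norm_mul]
  exact mul_le_mul (hC x hx) (hD x hx) (norm_nonneg _) ((norm_nonneg _).trans (hC x hx))

lemma mTr_sub (h : Good μ S) {z w : ℂ} (hz : z ∉ Set.image ((↑) : ℝ → ℂ) S)
    (hw : w ∉ Set.image ((↑) : ℝ → ℂ) S) : mTr μ z - mTr μ w = (z - w) * Kr μ z w := by
  unfold mTr Kr
  rw [← integral_sub (h.int_inv hz) (h.int_inv hw), ← integral_const_mul]
  refine integral_congr_ae ?_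
  filter_upwards [h.ae_mem] with x hx
  have h1 : (x : ℂ) - z ≠ 0 := fun h0 => hz ⟨x, hx, sub_eq_zero.mp h0⟩
  have h2 : (x : ℂ) - w ≠ 0 := fun h0 => hw ⟨x, hx, sub_eq_zero.mp h0⟩
  field_simp
  ring

lemma cov_le (h : Good μ S) {z w : ℂ} (hz : z ∉ Set.image ((↑) : ℝ → ℂ) S)
    (hw : w ∉ Set.image ((↑) : ℝ → ℂ) S) :
    ‖Kr μ z w - mTr μ z * mTr μ w‖ ^ 2 ≤ Vr μ z * Vr μ w := by
  have := h.prob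
  set a := mTr μ z with ha
  set b := mTr μ w with hb
  have hia : ∫ x : ℝ, ((x : ℂ) - z)⁻¹ ∂μ = a := rfl
  have hib : ∫ x : ℝ, ((x : ℂ) - w)⁻¹ ∂μ = b := rfl
  have h1 : Kr μ z w - a * b = ∫ x : ℝ, (((x : ℂ) - z)⁻¹ - a) * (((x : ℂ) - w)⁻¹ - b) ∂μ := by
    have : ∀ x : ℝ, (((x : ℂ) - z)⁻¹ - a) * (((x : ℂ) - w)⁻¹ - b) =
        ((((x : ℂ) - z)⁻¹ * ((x : ℂ) - w)⁻¹ - ((x : ℂ) - z)⁻¹ * b) - a * ((x : ℂ) - w)⁻¹) + a * b := by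
      intro x; ring
    simp_rw [this]
    have i1 := h.int_prod hz hw
    have i2 := (h.int_inv hz).mul_const b
    have i3 := (h.int_inv hw).const_mul a
    rw [integral_add (int_fun_sub (int_fun_sub i1 i2) i3) (integrable_const _), integral_sub (int_fun_sub i1 i2) i3,
      integral_sub i1 i2, integral_mul_const, integral_const_mul, hia, hib]
    simp [Kr]
  have hp : Integrable (fun x : ℝ => ‖((x : ℂ) - z)⁻¹ - a‖ * ‖((x : ℂ) - w)⁻¹ - b‖) μ := by
    obtain ⟨C, hC⟩ := h.bound_inv hz
    obtain ⟨D, hD⟩ := h.bound_inv hw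
    refine h.integrable_of (C := (C + ‖a‖) * (D + ‖b‖)) (((meas_inv z).sub_const _).norm.mul
      ((meas_inv w).sub_const _).norm).aestronglyMeasurable ?_
    intro x hx
    rw [norm_mul, norm_norm, norm_norm]
    have h1 : ‖((x : ℂ) - z)⁻¹ - a‖ ≤ C + ‖a‖ := (norm_sub_le _ _).trans (by linarith [hC x hx])
    have h2 : ‖((x : ℂ) - w)⁻¹ - b‖ ≤ D + ‖b‖ := (norm_sub_le _ _).trans (by linarith [hD x hx])
    exact mul_le_mul h1 h2 (norm_nonneg _) ((norm_nonneg _).trans h1)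
  have h2 : ‖Kr μ z w - a * b‖ ≤ ∫ x : ℝ, ‖((x : ℂ) - z)⁻¹ - a‖ * ‖((x : ℂ) - w)⁻¹ - b‖ ∂μ := by
    rw [h1]
    refine (norm_integral_le_integral_norm _).trans (le_of_eq ?_)
    simp_rw [norm_mul]
  calc ‖Kr μ z w - a * b‖ ^ 2 ≤ (∫ x : ℝ, ‖((x : ℂ) - z)⁻¹ - a‖ * ‖((x : ℂ) - w)⁻¹ - b‖ ∂μ) ^ 2 :=
        pow_le_pow_left₀ (norm_nonneg _) h2 2
    _ ≤ Vr μ z * Vr μ w := cs_real (h.int_var hz) (h.int_var hw) hp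

lemma hasDerivAt (h : Good μ S) {z : ℂ} (hz : z ∉ Set.image ((↑) : ℝ → ℂ) S) :
    HasDerivAt (mTr μ) (∫ x : ℝ, (((x : ℂ) - z) ^ 2)⁻¹ ∂μ) z := by
  have := h.prob
  obtain ⟨ε, hε, hb⟩ := h.away hz
  refine (hasDerivAt_integral_of_dominated_loc_of_deriv_le (μ := μ)
    (F := fun (w : ℂ) (x : ℝ) => ((x : ℂ) - w)⁻¹)
    (F' := fun (w : ℂ) (x : ℝ) => (((x : ℂ) - w) ^ 2)⁻¹)
    (bound := fun _ => (ε ^ 2)⁻¹) (Metric.ball_mem_nhds z hε)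
    (Eventually.of_forall fun w => (meas_inv w).aestronglyMeasurable) (h.int_inv hz)
    (by fun_prop) ?_ (integrable_const _) ?_).2
  · filter_upwards [h.ae_mem] with x hx w hw
    rw [norm_inv, norm_pow]
    apply inv_anti₀ (by positivity)
    exact pow_le_pow_left₀ hε.le (hb x hx w hw) 2
  · filter_upwards [h.ae_mem] with x hx w hw
    have hne : (x : ℂ) - w ≠ 0 := by
      have := hb x hx w hw
      exact norm_pos_iff.mp (by linarith)
    have h1 := ((hasDerivAt_id w).const_sub (x : ℂ)).fun_inv hne
    simpa [div_eq_mul_inv] using h1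

lemma analyticAt (h : Good μ S) {z : ℂ} (hz : z ∉ Set.image ((↑) : ℝ → ℂ) S) :
    AnalyticAt ℂ (mTr μ) z := by
  have : DifferentiableOn ℂ (mTr μ) {z : ℂ | z ∉ Set.image ((↑) : ℝ → ℂ) S} := fun w hw =>
    (h.hasDerivAt hw).differentiableAt.differentiableWithinAt
  exact this.analyticAt (h.isOpen_off.mem_nhds hz)

lemma deriv_real (h : Good μ S) {u : ℝ} (hz : (u : ℂ) ∉ Set.image ((↑) : ℝ → ℂ) S) :
    HasDerivAt (mTr μ) ((Inu μ u : ℝ) : ℂ) (u : ℂ) := by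
  convert h.hasDerivAt hz using 1
  unfold Inu
  rw [← integral_complex_ofReal]
  congr 1; funext x
  rw [← Complex.ofReal_sub, Complex.normSq_ofReal]
  push_cast; ring

end Good



namespace Good
variable {μ : Measure ℝ} {S : Set ℝ}

lemma Inu_ball (h : Good μ S) {u0 : ℝ} {u : ℂ} (hu : 0 < u.im) :
    μ.real (Metric.closedBall u0 ‖u - u0‖) / ‖u - u0‖ ^ 2 ≤ 4 * Inu μ u := by
  have := h.prob
  have hne : u - u0 ≠ 0 := by
    intro h0
    have : u.im = 0 := by simpa using congrArg Complex.im h0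
    exact hu.ne' this
  set r := ‖u - u0‖ with hr
  have hr0 : 0 < r := norm_pos_iff.mpr hne
  have h1 : ∫ x, (Metric.closedBall u0 r).indicator (fun _ => (4 * r ^ 2)⁻¹) x ∂μ
      = μ.real (Metric.closedBall u0 r) * (4 * r ^ 2)⁻¹ := by
    rw [integral_indicator_const _ Metric.isClosed_closedBall.measurableSet, smul_eq_mul]
  have h2 : ∫ x, (Metric.closedBall u0 r).indicator (fun _ => (4 * r ^ 2)⁻¹) x ∂μ ≤ Inu μ u := by
    rw [Inu_eq]
    refine integral_mono ((integrable_const _).indicator Metric.isClosed_closedBall.measurableSet)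
      (h.int_sq (off_of_im hu.ne')) ?_
    intro x
    by_cases hx : x ∈ Metric.closedBall u0 r
    · simp only [indicator_of_mem hx]
      have hne : (x : ℂ) - u ≠ 0 := by
        intro h0
        have : u.im = 0 := by simpa using congrArg Complex.im h0
        exact hu.ne' this
      rw [norm_inv, inv_pow]
      apply inv_anti₀ (by positivity)
      have h4 : ‖(x : ℂ) - u‖ ≤ 2 * r := by
        have : (x : ℂ) - u = ((x - u0 : ℝ) : ℂ) - (u - u0) := by push_cast; ring
        rw [this]
        refine (norm_sub_le _ _).trans ?_
        rw [Complex.norm_real]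
        have := Metric.mem_closedBall.mp hx
        rw [dist_eq_norm] at this
        linarith
      calc ‖(x : ℂ) - u‖ ^ 2 ≤ (2 * r) ^ 2 := by gcongr
        _ = _ := by ring
    · simp only [indicator_of_notMem hx]
      positivity
  rw [h1] at h2
  calc μ.real (Metric.closedBall u0 r) / r ^ 2
      = 4 * (μ.real (Metric.closedBall u0 r) * (4 * r ^ 2)⁻¹) := by field_simp
    _ ≤ _ := by linarith

lemma Inu_tendsto (h : Good μ S) {u0 : ℝ} (hu0 : u0 ∈ S) :
    Tendsto (Inu μ) (𝓝[{z : ℂ | 0 < z.im}] (u0 : ℂ)) atTop := by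
  have h1 : Tendsto (fun u : ℂ => ‖u - u0‖) (𝓝[{z : ℂ | 0 < z.im}] (u0 : ℂ)) (𝓝[>] 0) := by
    refine tendsto_nhdsWithin_iff.mpr ⟨?_, ?_⟩
    · have : Continuous (fun u : ℂ => ‖u - u0‖) := by fun_prop
      have := this.tendsto (u0 : ℂ)
      simp at this
      exact this.mono_left nhdsWithin_le_nhds
    · filter_upwards [self_mem_nhdsWithin] with u hu
      have hne : u - u0 ≠ 0 := by
        intro h0
        have : u.im = 0 := by simpa using congrArg Complex.im h0
        exact (show 0 < u.im from hu).ne' this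
      exact norm_pos_iff.mpr hne
  have h2 := (h.blow u0 hu0).comp h1
  have h3 : Tendsto (fun u => 4 * Inu μ u) (𝓝[{z : ℂ | 0 < z.im}] (u0 : ℂ)) atTop := by
    refine tendsto_atTop_mono' _ ?_ h2
    filter_upwards [self_mem_nhdsWithin] with u hu
    exact h.Inu_ball hu
  have h4 := h3.const_mul_atTop (show (0 : ℝ) < 1 / 4 by norm_num)
  refine h4.congr fun u => by ring

lemma small (h : Good μ S) {u0 : ℝ} (hu0 : u0 ∈ S) :
    ∀ᶠ u in 𝓝[{z : ℂ | 0 < z.im}] (u0 : ℂ), 4 * ‖mTr μ u‖ ^ 2 ≤ Inu μ u := by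
  have := h.prob
  obtain ⟨ε, hε, hμ⟩ : ∃ ε > 0, μ.real (Metric.closedBall u0 ε) ≤ 1 / 32 := by
    have h1 : Tendsto (fun r : ℝ => μ (Metric.closedBall u0 r)) (𝓝[>] 0)
        (𝓝 (μ (⋂ r > 0, Metric.closedBall u0 r))) := by
      refine tendsto_measure_biInter_gt (fun r _ =>
        Metric.isClosed_closedBall.measurableSet.nullMeasurableSet)
        (fun i j _ hij => Metric.closedBall_subset_closedBall hij) ⟨1, by simp, measure_ne_top _ _⟩
    have h2 : (⋂ r > (0 : ℝ), Metric.closedBall u0 r) = {u0} := by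
      ext x
      simp only [mem_iInter, Metric.mem_closedBall, mem_singleton_iff]
      constructor
      · intro hx
        exact dist_le_zero.mp (le_of_forall_gt_imp_ge_of_dense fun r hr => hx r hr)
      · rintro rfl r hr
        simpa using le_of_lt hr
    rw [h2, h.noat u0] at h1
    have h3 := (h1.eventually (gt_mem_nhds (show (0 : ENNReal) < ENNReal.ofReal (1 / 32) by simp))).and
      self_mem_nhdsWithin
    obtain ⟨ε, h4, h5⟩ := h3.exists
    refine ⟨ε, h5, ?_⟩
    exact ENNReal.toReal_le_of_le_ofReal (by norm_num) h4.le
  have hev : ∀ᶠ u in 𝓝[{z : ℂ | 0 < z.im}] (u0 : ℂ), u ∈ Metric.ball (u0 : ℂ) (ε / 2) :=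
    nhdsWithin_le_nhds (Metric.ball_mem_nhds _ (by positivity))
  filter_upwards [self_mem_nhdsWithin, hev,
    (h.Inu_tendsto hu0).eventually_ge_atTop (64 / ε ^ 2)] with u hu hub hI
  have hu' : 0 < u.im := hu
  have hoff : u ∉ Set.image ((↑) : ℝ → ℂ) S := off_of_im hu'.ne'
  have hBm : MeasurableSet (Metric.closedBall u0 ε) := Metric.isClosed_closedBall.measurableSet
  set χ : ℝ → ℝ := (Metric.closedBall u0 ε).indicator (fun _ => (1 : ℝ)) with hχ
  have hχm : Measurable χ := measurable_const.indicator hBm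
  have hχ2 : ∀ x, χ x ^ 2 = χ x := by
    intro x
    by_cases hx : x ∈ Metric.closedBall u0 ε
    · simp [hχ, indicator_of_mem hx]
    · simp [hχ, indicator_of_notMem hx]
  have hχi : Integrable χ μ := (integrable_const _).indicator hBm
  have hni : Integrable (fun x : ℝ => χ x * ‖((x : ℂ) - u)⁻¹‖) μ := by
    obtain ⟨C, hC⟩ := h.bound_inv hoff
    refine h.integrable_of (C := C) (hχm.mul (meas_inv u).norm).aestronglyMeasurable ?_
    intro x hx
    rw [norm_mul, norm_norm]
    have : ‖χ x‖ ≤ 1 := by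
      by_cases hx : x ∈ Metric.closedBall u0 ε
      · simp [hχ, indicator_of_mem hx]
      · simp [hχ, indicator_of_notMem hx]
    nlinarith [hC x hx, norm_nonneg ((x : ℂ) - u)⁻¹]
  have hcs := cs_real (μ := μ) (f := χ) (g := fun x : ℝ => ‖((x : ℂ) - u)⁻¹‖)
    (by simp_rw [hχ2]; exact hχi) (h.int_sq hoff) hni
  have hmass : ∫ x, χ x ^ 2 ∂μ ≤ 1 / 32 := by
    simp_rw [hχ2]
    rw [hχ, integral_indicator_const _ hBm]
    simpa using hμ
  rw [← Inu_eq] at hcs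
  have hm : ‖mTr μ u‖ ≤ (∫ x : ℝ, χ x * ‖((x : ℂ) - u)⁻¹‖ ∂μ) + 2 / ε := by
    have e : (∫ x : ℝ, χ x * ‖((x : ℂ) - u)⁻¹‖ ∂μ) + 2 / ε
        = ∫ x : ℝ, (χ x * ‖((x : ℂ) - u)⁻¹‖ + 2 / ε) ∂μ := by
      rw [integral_add hni (integrable_const _)]; simp
    rw [e]
    refine (norm_integral_le_integral_norm _).trans ?_
    refine integral_mono (h.int_inv hoff).norm (hni.add (integrable_const _)) ?_
    intro x
    by_cases hx : x ∈ Metric.closedBall u0 ε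
    · simp only [hχ, indicator_of_mem hx, one_mul]
      have : 0 < 2 / ε := by positivity
      linarith
    · simp only [hχ, indicator_of_notMem hx, zero_mul, zero_add, norm_inv]
      rw [Metric.mem_closedBall, not_le, Real.dist_eq] at hx
      rw [Metric.mem_ball, dist_eq_norm] at hub
      have h5 : |x - u0| ≤ ‖(x : ℂ) - u‖ + ‖u - u0‖ := by
        rw [← Real.norm_eq_abs, ← Complex.norm_real]
        have : ((x - u0 : ℝ) : ℂ) = ((x : ℂ) - u) + (u - u0) := by push_cast; ring
        rw [this]; exact norm_add_le _ _
      have h6 : ε / 2 ≤ ‖(x : ℂ) - u‖ := by linarith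
      calc ‖(x : ℂ) - u‖⁻¹ ≤ (ε / 2)⁻¹ := inv_anti₀ (by positivity) h6
        _ = _ := by rw [inv_div]
  set N := ∫ x : ℝ, χ x * ‖((x : ℂ) - u)⁻¹‖ ∂μ with hN
  have hJ : 0 < Inu μ u := h.Inu_pos hoff
  have h7 : N ^ 2 ≤ Inu μ u / 32 := by nlinarith
  have h8 : ‖mTr μ u‖ ^ 2 ≤ (N + 2 / ε) ^ 2 := pow_le_pow_left₀ (norm_nonneg _) hm 2
  have h9 : (2 / ε) ^ 2 = 4 / ε ^ 2 := by rw [div_pow]; norm_num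
  have h10 : 64 / ε ^ 2 = 16 * (4 / ε ^ 2) := by ring
  nlinarith [sq_nonneg (N - 2 / ε)]

lemma Inu_bdd (h : Good μ S) {z0 : ℂ} (hz : z0 ∉ Set.image ((↑) : ℝ → ℂ) S) :
    ∃ C, ∀ᶠ z in 𝓝 z0, Inu μ z ≤ C := by
  have := h.prob
  obtain ⟨ε, hε, hb⟩ := h.away hz
  refine ⟨(ε ^ 2)⁻¹, ?_⟩
  filter_upwards [Metric.ball_mem_nhds z0 hε, h.isOpen_off.mem_nhds hz] with z hz1 hz2
  rw [Inu_eq]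
  have h1 : (ε ^ 2)⁻¹ = ∫ x : ℝ, (ε ^ 2)⁻¹ ∂μ := by simp
  rw [h1]
  refine integral_mono_ae (h.int_sq hz2) (integrable_const _) ?_
  filter_upwards [h.ae_mem] with x hx
  simp only [norm_inv, inv_pow]
  have := hb x hx z hz1
  gcongr

lemma Inu_far (h : Good μ S) {L : ℝ} (hL0 : 0 < L) (hL : ∀ x ∈ S, |x| ≤ L) {z : ℂ}
    (hz : 2 * L ≤ ‖z‖) : Inu μ z * (L + ‖z‖) ^ 2 ≤ 9 := by
  have := h.prob
  have key : ∀ x ∈ S, ‖z‖ - L ≤ ‖(x : ℂ) - z‖ := by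
    intro x hx
    have h1 := norm_sub_norm_le z (x : ℂ)
    rw [norm_sub_rev, Complex.norm_real, Real.norm_eq_abs] at h1
    linarith [hL x hx]
  have hoff : z ∉ Set.image ((↑) : ℝ → ℂ) S := by
    rintro ⟨x, hx, rfl⟩
    rw [Complex.norm_real, Real.norm_eq_abs] at hz
    linarith [hL x hx]
  have hp : 0 < ‖z‖ - L := by linarith
  have h2 : Inu μ z ≤ ((‖z‖ - L) ^ 2)⁻¹ := by
    rw [Inu_eq]
    have h1 : ((‖z‖ - L) ^ 2)⁻¹ = ∫ x : ℝ, ((‖z‖ - L) ^ 2)⁻¹ ∂μ := by simp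
    rw [h1]
    refine integral_mono_ae (h.int_sq hoff) (integrable_const _) ?_
    filter_upwards [h.ae_mem] with x hx
    simp only [norm_inv, inv_pow]
    have := key x hx
    gcongr
  calc Inu μ z * (L + ‖z‖) ^ 2 ≤ ((‖z‖ - L) ^ 2)⁻¹ * (3 * (‖z‖ - L)) ^ 2 := by
        gcongr
        linarith
    _ = 9 := by field_simp; norm_num
end Good



lemma rpow_lower {a t l σ : ℝ} (ha : 0 < a) (hat : a ≤ t) (htl : t ≤ l) :
    l ^ σ * (a / l) ^ (max σ 0) ≤ t ^ σ := by
  have ht : 0 < t := by linarith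
  have hl : 0 < l := by linarith
  have h1 : t ^ σ = l ^ σ * (t / l) ^ σ := by
    rw [← Real.mul_rpow hl.le (by positivity)]
    congr 1; field_simp
  rw [h1]
  gcongr
  calc (a / l) ^ (max σ 0) ≤ (t / l) ^ (max σ 0) := by
        apply Real.rpow_le_rpow (by positivity) (by gcongr) (le_max_right _ _)
    _ ≤ (t / l) ^ σ := by
        apply Real.rpow_le_rpow_of_exponent_ge (by positivity) _ (le_max_left _ _)
        rw [div_le_one hl]; exact htl

lemma AbsJacobiData.mass_lower {μ : Measure ℝ} (d : AbsJacobiData μ) (j : Fin d.n) {a b k : ℝ}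
    (hab : a ≤ b) (hk : 0 ≤ k) (hsub : Icc a b ⊆ Icc (d.Am j) (d.Ap j))
    (hE : ∀ E ∈ Icc a b, k ≤ (d.Cj j)⁻¹ * ((E - d.Am j) ^ (d.sm j) * (d.Ap j - E) ^ (d.sp j))) :
    k * (b - a) ≤ μ.real (Icc a b) := by
  have := d.prob
  have h1 : ENNReal.ofReal (k * (b - a)) ≤ μ (Icc a b) := by
    have e : μ (Icc a b) = ∫⁻ x in Icc a b, ENNReal.ofReal (d.ρ x) := by
      conv_lhs => rw [d.decomp]
      exact withDensity_apply _ measurableSet_Icc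
    rw [e]
    calc ENNReal.ofReal (k * (b - a)) = ∫⁻ x in Icc a b, ENNReal.ofReal k := by
          rw [setLIntegral_const, Real.volume_Icc, ENNReal.ofReal_mul hk]
      _ ≤ ∫⁻ x in Icc a b, ENNReal.ofReal (d.ρ x) := by
          refine lintegral_mono_ae ?_
          have h2 := ae_restrict_of_ae_restrict_of_subset hsub (d.powerLaw j)
          filter_upwards [h2, ae_restrict_mem measurableSet_Icc] with x hx hx2
          exact ENNReal.ofReal_le_ofReal ((hE x hx2).trans hx.1)
  exact (ENNReal.ofReal_le_iff_le_toReal (measure_ne_top _ _)).mp h1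

lemma blow_aux {f : ℝ → ℝ} {c τ r0 : ℝ} (hc : 0 < c) (hτ : τ < 1) (hr0 : 0 < r0)
    (hf : ∀ r, 0 < r → r < r0 → c * r ^ τ * r ≤ f r) :
    Tendsto (fun r : ℝ => f r / r ^ 2) (𝓝[>] 0) atTop := by
  have h1 : Tendsto (fun r : ℝ => c * r ^ (τ - 1)) (𝓝[>] 0) atTop :=
    (tendsto_rpow_neg_nhdsGT_zero (by linarith)).const_mul_atTop hc
  refine tendsto_atTop_mono' _ ?_ h1
  filter_upwards [Ioo_mem_nhdsGT hr0] with r hr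
  rw [le_div_iff₀ (by have := hr.1; positivity)]
  refine le_trans (le_of_eq ?_) (hf r hr.1 hr.2)
  have h0 : r ≠ 0 := hr.1.ne'
  rw [Real.rpow_sub_one h0]
  field_simp

theorem AbsJacobiData.good {μ : Measure ℝ} (d : AbsJacobiData μ) :
    Good μ (⋃ j, Icc (d.Am j) (d.Ap j)) := by
  have hp := d.prob
  have hm : MeasurableSet (⋃ j, Icc (d.Am j) (d.Ap j)) :=
    MeasurableSet.iUnion fun j => measurableSet_Icc
  refine ⟨d.prob, isCompact_iUnion fun j => isCompact_Icc, ?_, d.centered, ?_, ?_⟩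
  · have e : μ (⋃ j, Icc (d.Am j) (d.Ap j))ᶜ
        = ∫⁻ x in (⋃ j, Icc (d.Am j) (d.Ap j))ᶜ, ENNReal.ofReal (d.ρ x) := by
      have := congrArg (fun m : Measure ℝ => m (⋃ j, Icc (d.Am j) (d.Ap j))ᶜ) d.decomp
      exact this.trans (withDensity_apply _ hm.compl)
    rw [e]
    rw [setLIntegral_congr_fun (g := fun _ => 0) hm.compl]
    · simp
    · intro x hx
      simp [d.ρ_supp x hx]
  · intro x
    have := congrArg (fun m : Measure ℝ => m {x}) d.decomp
    refine this.trans ?_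
    exact withDensity_absolutelyContinuous _ _ (by simp)
  · intro u0 hu0
    obtain ⟨j, hj⟩ := mem_iUnion.mp hu0
    set A := d.Am j with hA
    set B := d.Ap j with hB
    have hAB : A < B := d.lt j
    obtain ⟨l, hl⟩ : ∃ l, l = B - A := ⟨_, rfl⟩
    have hl0 : 0 < l := by linarith
    have hC : 0 < (d.Cj j)⁻¹ := inv_pos.mpr (by linarith [d.Cj_ge j])
    rcases le_total u0 ((A + B) / 2) with hh | hh
    · have hτ : max (d.sm j) 0 < 1 := max_lt (d.sm_mem j).2 one_pos
      refine blow_aux (c := (d.Cj j)⁻¹ * (l ^ d.sm j * (1 / (4 * l)) ^ max (d.sm j) 0 *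
        (l ^ d.sp j * ((l / 4) / l) ^ max (d.sp j) 0)) / 4) (by positivity) hτ
        (show 0 < l / 2 by positivity) ?_
      intro r hr hr2
      have h1 := d.mass_lower j (a := u0 + r / 4) (b := u0 + r / 2)
        (k := (d.Cj j)⁻¹ * ((l ^ d.sm j * ((r / 4) / l) ^ max (d.sm j) 0) *
        (l ^ d.sp j * ((l / 4) / l) ^ max (d.sp j) 0))) (by linarith) (by positivity)
        (Icc_subset_Icc (by linarith [hj.1]) (by linarith [hj.2])) ?_
      · have h2 : (r / 4) / l = (1 / (4 * l)) * r := by field_simp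
        rw [h2, Real.mul_rpow (by positivity) hr.le] at h1
        refine le_trans (le_of_eq (by ring)) (h1.trans ?_)
        refine measureReal_mono ?_ (measure_ne_top _ _)
        intro x hx
        rw [Metric.mem_closedBall, Real.dist_eq, abs_le]
        constructor <;> linarith [hx.1, hx.2]
      · intro E hE
        gcongr
        · exact Real.rpow_nonneg (by linarith [hj.1, hj.2, hE.1, hE.2]) _
        · exact rpow_lower (by positivity) (by linarith [hj.1, hE.1]) (by linarith [hj.1, hE.2])
        · exact rpow_lower (by positivity) (by linarith [hj.1, hE.2]) (by linarith [hj.1, hE.1])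
    · have hτ : max (d.sp j) 0 < 1 := max_lt (d.sp_mem j).2 one_pos
      refine blow_aux (c := (d.Cj j)⁻¹ * (l ^ d.sp j * (1 / (4 * l)) ^ max (d.sp j) 0 *
        (l ^ d.sm j * ((l / 4) / l) ^ max (d.sm j) 0)) / 4) (by positivity) hτ
        (show 0 < l / 2 by positivity) ?_
      intro r hr hr2
      have h1 := d.mass_lower j (a := u0 - r / 2) (b := u0 - r / 4)
        (k := (d.Cj j)⁻¹ * ((l ^ d.sm j * ((l / 4) / l) ^ max (d.sm j) 0) *
        (l ^ d.sp j * ((r / 4) / l) ^ max (d.sp j) 0))) (by linarith) (by positivity)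
        (Icc_subset_Icc (by linarith [hj.1]) (by linarith [hj.2])) ?_
      · have h2 : (r / 4) / l = (1 / (4 * l)) * r := by field_simp
        rw [h2, Real.mul_rpow (by positivity) hr.le] at h1
        refine le_trans (le_of_eq (by ring)) (h1.trans ?_)
        refine measureReal_mono ?_ (measure_ne_top _ _)
        intro x hx
        rw [Metric.mem_closedBall, Real.dist_eq, abs_le]
        constructor <;> linarith [hx.1, hx.2]
      · intro E hE
        gcongr
        · exact Real.rpow_nonneg (by linarith [hj.1, hj.2, hE.1, hE.2]) _
        · exact rpow_lower (by positivity) (by linarith [hj.2, hE.1]) (by linarith [hj.2, hE.2])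
        · exact rpow_lower (by positivity) (by linarith [hj.2, hE.2]) (by linarith [hj.2, hE.1])



/-- a point on the subordination curve -/
structure SPt (μa μb : Measure ℝ) (u v m z : ℂ) : Prop where
  hu : 0 < u.im
  hv : 0 < v.im
  hz : 0 < z.im
  ma : mTr μa u = m
  mb : mTr μb v = m
  eq : u + v + m⁻¹ = z

namespace SPt
variable {μa μb : Measure ℝ} {Sa Sb : Set ℝ} {u v m z : ℂ}

lemma symm (p : SPt μa μb u v m z) : SPt μb μa v u m z :=
  ⟨p.hv, p.hu, p.hz, p.mb, p.ma, by rw [← p.eq]; ring⟩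

lemma m_ne (p : SPt μa μb u v m z) (ha : Good μa Sa) : m ≠ 0 := by
  rw [← p.ma]; exact ha.mTr_ne p.hu

lemma m_im (p : SPt μa μb u v m z) (ha : Good μa Sa) : m.im = u.im * Inu μa u := by
  rw [← p.ma]; exact ha.mTr_im (Good.off_of_im p.hu.ne')

lemma m_im_pos (p : SPt μa μb u v m z) (ha : Good μa Sa) : 0 < m.im := by
  rw [p.m_im ha]; exact mul_pos p.hu (ha.Inu_pos (Good.off_of_im p.hu.ne'))

lemma star (p : SPt μa μb u v m z) (ha : Good μa Sa) (hb : Good μb Sb) :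
    Inu μa u * Inu μb v < (Inu μa u + Inu μb v) * ‖m‖ ^ 2 := by
  have h1 := p.m_im ha
  have h2 := p.symm.m_im hb
  have hJa := ha.Inu_pos (Good.off_of_im (S := Sa) p.hu.ne')
  have hJb := hb.Inu_pos (Good.off_of_im (S := Sb) p.hv.ne')
  have hmp := p.m_im_pos ha
  have hm2 : 0 < ‖m‖ ^ 2 := by have := norm_pos_iff.mpr (p.m_ne ha); positivity
  have h3 : z.im = u.im + v.im - m.im / ‖m‖ ^ 2 := by
    rw [← p.eq]; simp [Complex.inv_im, Complex.normSq_eq_norm_sq, neg_div]; ring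
  have h4 := p.hz
  rw [h3] at h4
  set Ja := Inu μa u
  set Jb := Inu μb v
  have h5 : m.im < (u.im + v.im) * ‖m‖ ^ 2 := by
    rw [sub_pos, div_lt_iff₀ hm2] at h4; exact h4
  have h6 : m.im * (Ja * Jb) < m.im * ((Ja + Jb) * ‖m‖ ^ 2) := by
    calc m.im * (Ja * Jb) < ((u.im + v.im) * ‖m‖ ^ 2) * (Ja * Jb) := by gcongr
      _ = ((u.im * Ja) * Jb + (v.im * Jb) * Ja) * ‖m‖ ^ 2 := by ring
      _ = m.im * ((Ja + Jb) * ‖m‖ ^ 2) := by rw [← h1, ← h2]; ring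
  exact lt_of_mul_lt_mul_left h6 hmp.le

lemma star2 (p : SPt μa μb u v m z) (ha : Good μa Sa) (hb : Good μb Sb) :
    Good.Vr μa u * Good.Vr μb v < ‖m‖ ^ 4 := by
  rw [ha.Vr_eq (Good.off_of_im p.hu.ne'), hb.Vr_eq (Good.off_of_im p.hv.ne'), p.ma, p.mb]
  nlinarith [p.star ha hb]

lemma star3 (p : SPt μa μb u v m z) (ha : Good μa Sa) (hb : Good μb Sb) {L : ℝ} (hL0 : 0 < L)
    (hL : ∀ x ∈ Sb, |x| ≤ L) :
    Inu μa u * (∫ x, x ^ 2 ∂μb) ≤ Inu μb v * (L + ‖v‖) ^ 2 := by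
  have h1 := hb.Vr_lower hL0 hL (Good.off_of_im p.hv.ne')
  have h2 := hb.Vr_eq (Good.off_of_im (S := Sb) p.hv.ne')
  have h3 := p.star ha hb
  have hJa := ha.Inu_pos (Good.off_of_im (S := Sa) p.hu.ne')
  rw [p.mb] at h1 h2
  have hm2 : 0 < ‖m‖ ^ 2 := by have := norm_pos_iff.mpr (p.m_ne ha); positivity
  have hp : 0 < (L + ‖v‖) ^ 2 := by positivity
  rw [div_le_iff₀ hp] at h1
  have h4 : ‖m‖ ^ 2 * (Inu μa u * (∫ x, x ^ 2 ∂μb)) ≤ ‖m‖ ^ 2 * (Inu μb v * (L + ‖v‖) ^ 2) := by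
    calc ‖m‖ ^ 2 * (Inu μa u * (∫ x, x ^ 2 ∂μb))
        = Inu μa u * (‖m‖ ^ 2 * (∫ x, x ^ 2 ∂μb)) := by ring
      _ ≤ Inu μa u * (Good.Vr μb v * (L + ‖v‖) ^ 2) := by gcongr
      _ = (Inu μa u * Good.Vr μb v) * (L + ‖v‖) ^ 2 := by ring
      _ ≤ (‖m‖ ^ 2 * Inu μb v) * (L + ‖v‖) ^ 2 := by
          refine mul_le_mul_of_nonneg_right ?_ hp.le
          rw [h2]; linarith
      _ = _ := by ring
  exact le_of_mul_le_mul_left h4 hm2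

lemma unique (ha : Good μa Sa) (hb : Good μb Sb) {u' v' m' : ℂ} (p : SPt μa μb u v m z)
    (p' : SPt μa μb u' v' m' z) : m = m' := by
  by_contra hne
  have hm := p.m_ne ha
  have hm' := p'.m_ne ha
  have ea := ha.mTr_sub (Good.off_of_im p.hu.ne') (Good.off_of_im p'.hu.ne')
  have eb := hb.mTr_sub (Good.off_of_im p.hv.ne') (Good.off_of_im p'.hv.ne')
  have ca := ha.cov_le (Good.off_of_im p.hu.ne') (Good.off_of_im p'.hu.ne')
  have cb := hb.cov_le (Good.off_of_im p.hv.ne') (Good.off_of_im p'.hv.ne')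
  rw [p.ma, p'.ma] at ea ca
  rw [p.mb, p'.mb] at eb cb
  have h1 := p.star2 ha hb
  have h2 := p'.star2 ha hb
  set Ka := Good.Kr μa u u'
  set Kb := Good.Kr μb v v'
  have hd : m - m' ≠ 0 := sub_ne_zero.mpr hne
  have hKa : Ka ≠ 0 := by rintro h0; rw [h0, mul_zero] at ea; exact hd ea
  have hKb : Kb ≠ 0 := by rintro h0; rw [h0, mul_zero] at eb; exact hd eb
  have hz : u + v + m⁻¹ = u' + v' + m'⁻¹ := by rw [p.eq, p'.eq]
  have hz2 : ((u - u') + (v - v')) * (m * m') = m - m' := by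
    have : (u - u') + (v - v') = m'⁻¹ - m⁻¹ := by linear_combination hz
    rw [this]; field_simp
  have h3 : (Ka - m * m') * (Kb - m * m') = (m * m') ^ 2 := by
    have h4 : (m - m') * (Ka * Kb) = (m - m') * ((Ka + Kb) * (m * m')) := by
      calc (m - m') * (Ka * Kb) = (((u - u') * Ka) * Kb + ((v - v') * Kb) * Ka) * (m * m') := by
            rw [← hz2]; ring
        _ = _ := by rw [← ea, ← eb]; ring
    have h5 := mul_left_cancel₀ hd h4
    linear_combination h5
  have h6 : ‖Ka - m * m'‖ ^ 2 * ‖Kb - m * m'‖ ^ 2 = ‖m‖ ^ 4 * ‖m'‖ ^ 4 := by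
    rw [← mul_pow, ← norm_mul, h3, norm_pow, norm_mul]; ring
  have hV : ∀ (μ : Measure ℝ) (w : ℂ), 0 ≤ Good.Vr μ w := fun μ w =>
    integral_nonneg fun x => by positivity
  have h7 : ‖Ka - m * m'‖ ^ 2 * ‖Kb - m * m'‖ ^ 2 ≤
      (Good.Vr μa u * Good.Vr μa u') * (Good.Vr μb v * Good.Vr μb v') :=
    mul_le_mul ca cb (by positivity) (mul_nonneg (hV _ _) (hV _ _))
  have h8 : (Good.Vr μa u * Good.Vr μb v) * (Good.Vr μa u' * Good.Vr μb v') < ‖m‖ ^ 4 * ‖m'‖ ^ 4 :=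
    mul_lt_mul'' h1 h2 (mul_nonneg (hV _ _) (hV _ _)) (mul_nonneg (hV _ _) (hV _ _))
  have h9 : (Good.Vr μa u * Good.Vr μb v) * (Good.Vr μa u' * Good.Vr μb v') =
    (Good.Vr μa u * Good.Vr μa u') * (Good.Vr μb v * Good.Vr μb v') := by ring
  linarith
end SPt

lemma IsPairSubordination.spt {μa μb : Measure ℝ} {ωa ωb : ℂ → ℂ}
    (h : IsPairSubordination μa μb ωa ωb) {z : ℂ} (hz : 0 < z.im) :
    SPt μa μb (ωb z) (ωa z) (mTr μa (ωb z)) z := by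
  have e1 := h.eq_a z hz
  have e2 := h.eq_b z hz
  unfold FTr at e1 e2
  refine ⟨hz.trans_le (h.im_b z hz), hz.trans_le (h.im_a z hz), hz, rfl, ?_, ?_⟩
  · have : -(mTr μb (ωa z))⁻¹ = -(mTr μa (ωb z))⁻¹ := by rw [← e1, ← e2]
    exact inv_injective (neg_injective this)
  · linear_combination e1



lemma alg1 {w B : ℂ} (hw : w ≠ 0) (hD : 1 - w * B ≠ 0) :
    B / (1 - w * B) = -w⁻¹ + (w * (1 - w * B))⁻¹ := by
  obtain ⟨D, h⟩ : ∃ D, D = 1 - w * B := ⟨_, rfl⟩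
  rw [← h] at hD ⊢
  field_simp
  linear_combination h

lemma alg2 {w x : ℂ} (hD : 1 + x * w ≠ 0) :
    w / (1 + x * w) = w * (1 - w * (x / (1 + x * w))) := by
  obtain ⟨D, h⟩ : ∃ D, D = 1 + x * w := ⟨_, rfl⟩
  rw [← h] at hD ⊢
  field_simp
  linear_combination -w * h

/-- Local analytic inverse preserving the half planes. -/
lemma local_inv {f : ℂ → ℂ} {a : ℂ} {N : Set ℂ} (hf : AnalyticAt ℂ f a) (hf' : deriv f a ≠ 0)
    (hN : N ∈ 𝓝 a) (him : ∀ w ∈ N, ∃ P > 0, (f w).im = w.im * P) :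
    ∃ (g : ℂ → ℂ) (W : Set ℂ) (r : ℝ), 0 < r ∧ IsOpen W ∧ a ∈ W ∧ W ⊆ N ∧
      (∀ m ∈ Metric.ball (f a) r, AnalyticAt ℂ g m) ∧ g (f a) = a ∧
      (∀ m ∈ Metric.ball (f a) r, g m ∈ W ∧ f (g m) = m ∧ (0 < m.im → 0 < (g m).im) ∧
        (m.im = 0 → (g m).im = 0)) ∧
      (∀ w ∈ W, g (f w) = w) := by
  let i : ℂ ≃L[ℂ] ℂ := .unitsEquivAut ℂ (.mk0 _ hf')
  have hfd : HasStrictFDerivAt f i.toContinuousLinearMap a := hf.hasStrictDerivAt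
  let R : OpenPartialHomeomorph ℂ ℂ := hfd.toOpenPartialHomeomorph _
  have hx : a ∈ R.source := HasStrictFDerivAt.mem_toOpenPartialHomeomorph_source _
  have hRf : ∀ w, R w = f w := fun w => rfl
  have han : AnalyticAt ℂ R.symm (f a) := by
    refine R.hasFPowerSeriesAt_symm hx hf.hasFPowerSeriesAt (i := i) ?_ |>.analyticAt
    ext
    simp [i]
  have hga : R.symm (f a) = a := R.left_inv hx
  have hta : f a ∈ R.target := R.map_source hx
  have hWo : IsOpen (R.source ∩ interior N) := R.open_source.inter isOpen_interior
  have hWa : a ∈ R.source ∩ interior N := ⟨hx, mem_interior_iff_mem_nhds.mpr hN⟩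
  have hev : ∀ᶠ m in 𝓝 (f a), AnalyticAt ℂ R.symm m ∧ m ∈ R.target ∧
      R.symm m ∈ R.source ∩ interior N := by
    refine han.eventually_analyticAt.and
      (Filter.Eventually.and (R.open_target.mem_nhds hta) ?_)
    refine han.continuousAt.eventually_mem ?_
    rw [hga]; exact hWo.mem_nhds hWa
  obtain ⟨r, hr, hb⟩ := Metric.eventually_nhds_iff_ball.mp hev
  refine ⟨R.symm, R.source ∩ interior N, r, hr, hWo, hWa,
    inter_subset_right.trans interior_subset, fun m hm => (hb m hm).1, hga, ?_, ?_⟩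
  · intro m hm
    obtain ⟨-, h2, h3⟩ := hb m hm
    have h4 : f (R.symm m) = m := R.right_inv h2
    obtain ⟨P, hP, h5⟩ := him (R.symm m) (interior_subset h3.2)
    rw [h4] at h5
    refine ⟨h3, h4, ?_, ?_⟩
    · intro h
      rw [h5] at h
      exact (pos_iff_pos_of_mul_pos h).mpr hP
    · intro h
      rw [h5] at h
      exact (mul_eq_zero.mp h).resolve_right hP.ne'
  · intro w hw
    exact R.left_inv hw.1

/-- local inverse of the Stieltjes transform on the upper half plane -/
structure Chart (μ : Measure ℝ) (g : ℂ → ℂ) (U : Set ℂ) (m0 r : ℝ) : Prop where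
  hr : 0 < r
  openU : IsOpen U
  maps : ∀ m ∈ Metric.ball (m0 : ℂ) r, 0 < m.im → g m ∈ U ∧ 0 < (g m).im ∧ mTr μ (g m) = m
  inv : ∀ u ∈ U, 0 < u.im → mTr μ u ∈ Metric.ball (m0 : ℂ) r → g (mTr μ u) = u
  cont : ∀ m ∈ Metric.ball (m0 : ℂ) r, 0 < m.im → ContinuousAt g m

lemma Chart.shrink {μ : Measure ℝ} {g : ℂ → ℂ} {U : Set ℂ} {m0 r r' : ℝ} (h : Chart μ g U m0 r)
    (hr' : 0 < r') (hle : r' ≤ r) : Chart μ g U m0 r' :=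
  ⟨hr', h.openU, fun m hm => h.maps m (Metric.ball_subset_ball hle hm),
    fun u hu hi hm => h.inv u hu hi (Metric.ball_subset_ball hle hm),
    fun m hm => h.cont m (Metric.ball_subset_ball hle hm)⟩

namespace Good
variable {μ : Measure ℝ} {S : Set ℝ}

lemma chart_fin (h : Good μ S) {u0 : ℝ} (hu : (u0 : ℂ) ∉ Set.image ((↑) : ℝ → ℂ) S) {m0 : ℝ}
    (hm0 : mTr μ u0 = m0) :
    ∃ (g : ℂ → ℂ) (U : Set ℂ) (r : ℝ), Chart μ g U m0 r ∧ U ∈ 𝓝 (u0 : ℂ) ∧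
      AnalyticAt ℂ g m0 ∧ ∀ᶠ x : ℝ in 𝓝 m0, (g x).im = 0 := by
  have hd : deriv (mTr μ) (u0 : ℂ) ≠ 0 := by
    rw [(h.deriv_real hu).deriv]
    exact_mod_cast (h.Inu_pos hu).ne'
  obtain ⟨g, W, r, hr, hWo, haW, -, han, hga, hmaps, hinv⟩ := local_inv (h.analyticAt hu) hd
    (h.isOpen_off.mem_nhds hu) (fun w hw => ⟨Inu μ w, h.Inu_pos hw, h.mTr_im hw⟩)
  rw [hm0] at han hmaps hga
  refine ⟨g, W, r, ⟨hr, hWo, ?_, ?_, ?_⟩, hWo.mem_nhds haW, han _ (Metric.mem_ball_self hr), ?_⟩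
  · intro m hm hi
    obtain ⟨h1, h2, h3, -⟩ := hmaps m hm
    exact ⟨h1, h3 hi, h2⟩
  · intro u hu _ _
    exact hinv u hu
  · intro m hm _
    exact (han m hm).continuousAt
  · have hc : ∀ᶠ x : ℝ in 𝓝 m0, (x : ℂ) ∈ Metric.ball (m0 : ℂ) r :=
      Complex.continuous_ofReal.continuousAt.eventually_mem (Metric.ball_mem_nhds _ hr)
    filter_upwards [hc] with x hx
    exact (hmaps x hx).2.2.2 (Complex.ofReal_im x)

/-- first moment transform at infinity -/
def Bf (μ : Measure ℝ) (w : ℂ) : ℂ := ∫ x : ℝ, (x : ℂ) / (1 + x * w) ∂μ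

lemma Bf_analytic (h : Good μ S) : ∃ ε > 0, (∀ x ∈ S, ∀ w ∈ Metric.ball (0 : ℂ) ε,
      1 / 2 ≤ ‖1 + (x : ℂ) * w‖) ∧ ∀ w ∈ Metric.ball (0 : ℂ) ε,
      Integrable (fun x : ℝ => (x : ℂ) / (1 + x * w)) μ ∧ DifferentiableAt ℂ (Bf μ) w := by
  have := h.prob
  obtain ⟨L, hL0, hL⟩ := h.bdd
  have key : ∀ x ∈ S, ∀ w ∈ Metric.ball (0 : ℂ) (1 / (2 * L)), 1 / 2 ≤ ‖1 + (x : ℂ) * w‖ := by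
    intro x hx w hw
    rw [mem_ball_zero_iff] at hw
    have h1 : ‖(x : ℂ) * w‖ ≤ 1 / 2 := by
      rw [norm_mul, Complex.norm_real, Real.norm_eq_abs]
      calc |x| * ‖w‖ ≤ L * (1 / (2 * L)) := by
            gcongr
            exact hL x hx
        _ = 1 / 2 := by field_simp
    have h2 := norm_sub_le (1 + (x : ℂ) * w) ((x : ℂ) * w)
    rw [add_sub_cancel_right, norm_one] at h2
    linarith
  have hmeas : ∀ w : ℂ, AEStronglyMeasurable (fun x : ℝ => (x : ℂ) / (1 + x * w)) μ := by
    intro w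
    have : Measurable (fun x : ℝ => (x : ℂ) / (1 + x * w)) := by fun_prop
    exact this.aestronglyMeasurable
  have hint : ∀ w ∈ Metric.ball (0 : ℂ) (1 / (2 * L)),
      Integrable (fun x : ℝ => (x : ℂ) / (1 + x * w)) μ := by
    intro w hw
    refine h.integrable_of (C := L / (1 / 2)) (hmeas w) ?_
    intro x hx
    rw [norm_div, Complex.norm_real, Real.norm_eq_abs]
    have := key x hx w hw
    gcongr
    exact hL x hx
  refine ⟨1 / (2 * L), by positivity, key, fun w hw => ⟨hint w hw, ?_⟩⟩
  refine (hasDerivAt_integral_of_dominated_loc_of_deriv_le (μ := μ)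
    (F := fun (w : ℂ) (x : ℝ) => (x : ℂ) / (1 + x * w))
    (F' := fun (w : ℂ) (x : ℝ) => -(x : ℂ) ^ 2 / (1 + x * w) ^ 2)
    (bound := fun _ => L ^ 2 / (1 / 2) ^ 2) (Metric.isOpen_ball.mem_nhds hw)
    (Eventually.of_forall fun w => hmeas w) (hint w hw)
    (Measurable.aestronglyMeasurable (by fun_prop)) ?_ (integrable_const _) ?_).2.differentiableAt
  · filter_upwards [h.ae_mem] with x hx w hw
    rw [norm_div, norm_neg, norm_pow, norm_pow, Complex.norm_real, Real.norm_eq_abs]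
    have := key x hx w hw
    gcongr
    exact hL x hx
  · filter_upwards [h.ae_mem] with x hx w hw
    have hne : 1 + (x : ℂ) * w ≠ 0 := by
      have := key x hx w hw
      exact norm_pos_iff.mp (by linarith)
    have h1 : HasDerivAt (fun w : ℂ => 1 + (x : ℂ) * w) (x : ℂ) w := by
      simpa using ((hasDerivAt_id w).const_mul (x : ℂ)).const_add 1
    have h2 := (h1.fun_inv hne).const_mul (x : ℂ)
    simp only [div_eq_mul_inv] at h2 ⊢
    have h3 : -(x : ℂ) ^ 2 * ((1 + (x : ℂ) * w) ^ 2)⁻¹ =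
        (x : ℂ) * (-(x : ℂ) * ((1 + (x : ℂ) * w) ^ 2)⁻¹) := by ring
    rw [h3]
    exact h2

lemma mTr_inf (h : Good μ S) : ∃ ε > 0, ∀ w ∈ Metric.ball (0 : ℂ) ε, DifferentiableAt ℂ (Bf μ) w ∧
    (w ≠ 0 → -w⁻¹ ∉ Set.image ((↑) : ℝ → ℂ) S ∧ mTr μ (-w⁻¹) = w * (1 - w * Bf μ w)) := by
  have := h.prob
  obtain ⟨ε, hε, key, hB⟩ := h.Bf_analytic
  refine ⟨ε, hε, fun w hw => ⟨(hB w hw).2, fun hw0 => ⟨?_, ?_⟩⟩⟩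
  · rintro ⟨x, hx, hxw⟩
    have := key x hx w hw
    rw [hxw] at this
    rw [neg_mul, inv_mul_cancel₀ hw0] at this
    norm_num at this
  · have h1 : w * (1 - w * Bf μ w) = ∫ x : ℝ, w * (1 - w * ((x : ℂ) / (1 + x * w))) ∂μ := by
      rw [integral_const_mul, integral_sub (integrable_const _) ((hB w hw).1.const_mul w),
        integral_const_mul]
      simp [Bf]
    rw [h1]
    refine integral_congr_ae ?_
    filter_upwards [h.ae_mem] with x hx
    have hne : 1 + (x : ℂ) * w ≠ 0 := by
      have := key x hx w hw
      exact norm_pos_iff.mp (by linarith)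
    have h2 : (x : ℂ) - -w⁻¹ = (1 + x * w) / w := by field_simp; ring
    rw [h2, inv_div]
    exact alg2 hne

lemma Bf_real (t : ℝ) : (Bf μ t).im = 0 := by
  have : Bf μ t = ((∫ x : ℝ, x / (1 + x * t) ∂μ : ℝ) : ℂ) := by
    unfold Bf
    rw [← integral_complex_ofReal]
    congr 1; funext x; push_cast; rfl
  rw [this, Complex.ofReal_im]

lemma tendsto_neg_inv : Tendsto (fun v : ℂ => -v⁻¹) (Bornology.cobounded ℂ) (𝓝 0) := by
  have := (tendsto_inv₀_cobounded (α := ℂ)).neg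
  simpa using this

lemma chart_inf (h : Good μ S) :
    ∃ (g : ℂ → ℂ) (U : Set ℂ) (r : ℝ) (R : ℂ → ℂ), Chart μ g U 0 r ∧ U ∈ Bornology.cobounded ℂ ∧
      AnalyticAt ℂ R 0 ∧ (∀ᶠ x : ℝ in 𝓝 0, (R x).im = 0) ∧
      (∀ m ∈ Metric.ball (0 : ℂ) r, 0 < m.im → R m = g m + m⁻¹) := by
  obtain ⟨ε, hε, hw⟩ := h.mTr_inf
  have hBan : AnalyticAt ℂ (Bf μ) 0 := by
    have : DifferentiableOn ℂ (Bf μ) (Metric.ball 0 ε) := fun w hwb =>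
      (hw w hwb).1.differentiableWithinAt
    exact this.analyticAt (Metric.ball_mem_nhds _ hε)
  set M : ℂ → ℂ := fun w => w * (1 - w * Bf μ w) with hM
  have hMan : AnalyticAt ℂ M 0 := analyticAt_id.mul
    (analyticAt_const.sub (analyticAt_id.mul hBan))
  have hM0 : M 0 = 0 := by simp [hM]
  have hMd : deriv M 0 = 1 := by
    have h1 : HasDerivAt (fun w : ℂ => 1 - w * Bf μ w) (-(Bf μ 0)) 0 := by
      have := ((hasDerivAt_id (0 : ℂ)).mul hBan.differentiableAt.hasDerivAt).const_sub 1
      simpa using this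
    have h2 := HasDerivAt.fun_mul (hasDerivAt_id' (0 : ℂ)) h1
    simpa using h2.deriv
  obtain ⟨k, W, r, hr, hWo, haW, hWN, han, hka, hmaps, hinv⟩ := local_inv hMan
    (by rw [hMd]; exact one_ne_zero) (Metric.ball_mem_nhds 0 hε) (by
      intro w hwb
      by_cases hw0 : w = 0
      · exact ⟨1, one_pos, by simp [hw0, hM]⟩
      · obtain ⟨h1, h2⟩ := (hw w hwb).2 hw0
        refine ⟨(Complex.normSq w)⁻¹ * Inu μ (-w⁻¹), mul_pos
          (inv_pos.mpr (Complex.normSq_pos.mpr hw0)) (h.Inu_pos h1), ?_⟩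
        simp only [hM]
        rw [← h2, h.mTr_im h1]
        simp [Complex.inv_im, div_eq_mul_inv]
        ring)
  rw [hM0] at han hka hmaps
  have hkim : ∀ m ∈ Metric.ball (0 : ℂ) r, 0 < m.im → k m ≠ 0 := by
    intro m hm hi h0
    have := (hmaps m hm).2.2.1 hi
    rw [h0] at this
    simp at this
  refine ⟨fun m => -(k m)⁻¹, {v | v ≠ 0 ∧ -v⁻¹ ∈ W}, r, fun m => Bf μ (k m) / (1 - k m * Bf μ (k m)),
    ⟨hr, ?_, ?_, ?_, ?_⟩, ?_, ?_, ?_, ?_⟩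
  · have hc : ContinuousOn (fun v : ℂ => -v⁻¹) {v | v ≠ 0} :=
      (continuousOn_inv₀ (G₀ := ℂ)).neg
    exact hc.isOpen_inter_preimage isOpen_ne hWo
  · intro m hm hi
    rw [Complex.ofReal_zero] at hm
    obtain ⟨h1, h2, h3, -⟩ := hmaps m hm
    have hk := hkim m hm hi
    refine ⟨⟨by simpa using hk, by simpa using h1⟩, ?_, ?_⟩
    · rw [Complex.neg_im, Complex.inv_im, neg_div, neg_neg]
      exact div_pos (h3 hi) (Complex.normSq_pos.mpr hk)
    · rw [((hw _ (hWN h1)).2 hk).2]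
      exact h2
  · rintro v ⟨hv0, hvW⟩ - -
    have hne : -v⁻¹ ≠ 0 := neg_ne_zero.mpr (inv_ne_zero hv0)
    have h1 := ((hw _ (hWN hvW)).2 hne).2
    have h2 : -(-v⁻¹)⁻¹ = v := by rw [inv_neg, neg_neg, inv_inv]
    rw [h2] at h1
    have h3 := hinv _ hvW
    have h4 : M (-v⁻¹) = mTr μ v := h1.symm
    rw [h4] at h3
    simp only [h3, h2]
  · intro m hm hi
    rw [Complex.ofReal_zero] at hm
    exact ((han m hm).continuousAt.inv₀ (hkim m hm hi)).neg
  · have h1 := tendsto_neg_inv.eventually (hWo.mem_nhds haW)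
    have h2 : ∀ᶠ v : ℂ in Bornology.cobounded ℂ, v ≠ 0 := by
      have : ({0} : Set ℂ)ᶜ ∈ Bornology.cobounded ℂ :=
        Bornology.isBounded_def.mp Bornology.isBounded_singleton
      exact this
    exact h2.and h1
  · have hk0 := han 0 (Metric.mem_ball_self hr)
    have hBk : AnalyticAt ℂ (fun m => Bf μ (k m)) 0 := by
      refine AnalyticAt.fun_comp ?_ hk0
      rw [hka]; exact hBan
    refine hBk.div (analyticAt_const.sub (hk0.mul hBk)) ?_
    simp [hka]
  · have hc : ∀ᶠ x : ℝ in 𝓝 0, (x : ℂ) ∈ Metric.ball (0 : ℂ) r :=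
      Complex.continuous_ofReal.continuousAt.eventually_mem
        (by rw [Complex.ofReal_zero]; exact Metric.ball_mem_nhds _ hr)
    filter_upwards [hc] with x hx
    have h1 := (hmaps x hx).2.2.2 (Complex.ofReal_im x)
    have h2 : k x = ((k x).re : ℂ) := Complex.ext (by simp) (by simp [h1])
    have h3 : Bf μ (k x) = ((Bf μ (k x)).re : ℂ) := by
      refine Complex.ext (by simp) ?_
      rw [h2, Bf_real]; simp
    have h4 : Bf μ (k x) / (1 - k x * Bf μ (k x)) =
        (((Bf μ (k x)).re / (1 - (k x).re * (Bf μ (k x)).re) : ℝ) : ℂ) := by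
      push_cast
      rw [← h3, ← h2]
    rw [h4, Complex.ofReal_im]
  · intro m hm hi
    obtain ⟨h1, h2, h3, -⟩ := hmaps m hm
    have hk := hkim m hm hi
    have hm0 : m ≠ 0 := by rintro rfl; simp at hi
    have hD : 1 - k m * Bf μ (k m) ≠ 0 := by
      intro h0
      apply hm0
      rw [← h2, hM]
      simp [h0]
    have h5 : m = k m * (1 - k m * Bf μ (k m)) := h2.symm
    have h6 : m⁻¹ = (k m * (1 - k m * Bf μ (k m)))⁻¹ := by rw [← h5]
    simp only [h6]
    exact alg1 hk hD

lemma lim_inf (h : Good μ S) : Tendsto (mTr μ) (Bornology.cobounded ℂ) (𝓝 0) ∧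
    ∃ c, Tendsto (fun v => v + (mTr μ v)⁻¹) (Bornology.cobounded ℂ) (𝓝 c) := by
  obtain ⟨ε, hε, hw⟩ := h.mTr_inf
  have hBc : ContinuousAt (Bf μ) 0 := (hw 0 (Metric.mem_ball_self hε)).1.continuousAt
  have hD : Tendsto (fun w : ℂ => 1 - w * Bf μ w) (𝓝 0) (𝓝 1) := by
    have : ContinuousAt (fun w : ℂ => 1 - w * Bf μ w) 0 :=
      continuousAt_const.sub (continuousAt_id.mul hBc)
    simpa using this.tendsto
  have h2 : ∀ᶠ v : ℂ in Bornology.cobounded ℂ, v ≠ 0 := by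
    have : ({0} : Set ℂ)ᶜ ∈ Bornology.cobounded ℂ :=
      Bornology.isBounded_def.mp Bornology.isBounded_singleton
    exact this
  have h3 := tendsto_neg_inv.eventually (Metric.ball_mem_nhds 0 hε)
  have key : ∀ᶠ v : ℂ in Bornology.cobounded ℂ,
      mTr μ v = -v⁻¹ * (1 - -v⁻¹ * Bf μ (-v⁻¹)) := by
    filter_upwards [h2, h3] with v hv hvb
    have hne : -v⁻¹ ≠ 0 := neg_ne_zero.mpr (inv_ne_zero hv)
    have h1 := ((hw _ hvb).2 hne).2
    rwa [inv_neg, neg_neg, inv_inv] at h1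
  constructor
  · have h5 : Tendsto (fun w : ℂ => w * (1 - w * Bf μ w)) (𝓝 0) (𝓝 0) := by
      have := (tendsto_id (α := ℂ) (x := 𝓝 0)).mul hD
      simpa using this
    exact (h5.comp tendsto_neg_inv).congr' (key.mono fun v hv => hv.symm)
  · have h5 : Tendsto (fun w : ℂ => Bf μ w / (1 - w * Bf μ w)) (𝓝 0) (𝓝 (Bf μ 0 / 1)) :=
      hBc.tendsto.div hD one_ne_zero
    refine ⟨Bf μ 0 / 1, (h5.comp tendsto_neg_inv).congr' ?_⟩
    have h6 := (hD.comp tendsto_neg_inv).eventually (isOpen_ne.mem_nhds (one_ne_zero (α := ℂ)))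
    filter_upwards [h2, key, h6] with v hv hk hne
    rw [hk]
    simp only [Function.comp] at hne ⊢
    have h7 : -v⁻¹ ≠ 0 := neg_ne_zero.mpr (inv_ne_zero hv)
    have h8 : v = -(-v⁻¹)⁻¹ := by rw [inv_neg, neg_neg, inv_inv]
    set w := -v⁻¹
    rw [h8]
    exact alg1 h7 hne
end Good



lemma chart_conv {μa μb : Measure ℝ} {Sa Sb : Set ℝ} (ha : Good μa Sa) (hb : Good μb Sb)
    {ωa ωb : ℂ → ℂ} (hsub : IsPairSubordination μa μb ωa ωb) {E0 m0 r : ℝ}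
    {ga gb Z : ℂ → ℂ} {U V : Set ℂ} (ca : Chart μa ga U m0 r) (cb : Chart μb gb V m0 r)
    (hZ : AnalyticAt ℂ Z m0)
    (hZe : ∀ m ∈ Metric.ball (m0 : ℂ) r, 0 < m.im → Z m = ga m + gb m + m⁻¹)
    (hfr : ∀ ε > 0, ∃ᶠ z in 𝓝[{z : ℂ | 0 < z.im}] (E0 : ℂ), ωb z ∈ U ∧ ωa z ∈ V ∧
      mTr μa (ωb z) ∈ Metric.ball (m0 : ℂ) ε) :
    Tendsto (fun z => mTr μa (ωb z)) (𝓝[{z : ℂ | 0 < z.im}] (E0 : ℂ)) (𝓝 (m0 : ℂ)) ∧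
    (∀ᶠ z in 𝓝[{z : ℂ | 0 < z.im}] (E0 : ℂ), Z (mTr μa (ωb z)) = z ∧ 0 < (mTr μa (ωb z)).im) ∧
    (∃ r > 0, ∀ m1 ∈ Metric.ball (m0 : ℂ) r, ∀ m2 ∈ Metric.ball (m0 : ℂ) r, 0 < m1.im →
      0 < m2.im → Z m1 = Z m2 → 0 < (Z m1).im → m1 = m2) := by
  set n : ℂ → ℂ := fun z => mTr μa (ωb z) with hn
  have hspt : ∀ z : ℂ, 0 < z.im → SPt μa μb (ωb z) (ωa z) (n z) z := fun z hz => hsub.spt hz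
  have hnim : ∀ z : ℂ, 0 < z.im → 0 < (n z).im := fun z hz => (hspt z hz).m_im_pos ha
  have hopen : IsOpen {z : ℂ | 0 < z.im} := isOpen_lt continuous_const Complex.continuous_im
  have hωb : ∀ z : ℂ, 0 < z.im → ContinuousAt ωb z := fun z hz =>
    (hsub.diff_b.differentiableAt (hopen.mem_nhds hz)).continuousAt
  have hωa : ∀ z : ℂ, 0 < z.im → ContinuousAt ωa z := fun z hz =>
    (hsub.diff_a.differentiableAt (hopen.mem_nhds hz)).continuousAt
  have hnc : ∀ z : ℂ, 0 < z.im → ContinuousAt n z := fun z hz =>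
    ContinuousAt.comp (g := mTr μa)
      (ha.analyticAt (Good.off_of_im (hspt z hz).hu.ne')).continuousAt (hωb z hz)
  have hin : ∀ z : ℂ, 0 < z.im → ωb z ∈ U → ωa z ∈ V → n z ∈ Metric.ball (m0 : ℂ) r →
      ga (n z) = ωb z ∧ gb (n z) = ωa z ∧ Z (n z) = z := by
    intro z hz h1 h2 h3
    have p := hspt z hz
    have e1 : ga (n z) = ωb z := ca.inv (ωb z) h1 p.hu h3
    have e2 : gb (n z) = ωa z := by
      have := cb.inv (ωa z) h2 p.hv (by rw [p.mb]; exact h3)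
      rwa [p.mb] at this
    exact ⟨e1, e2, by rw [hZe _ h3 (hnim z hz), e1, e2, p.eq]⟩
  have hr := ca.hr
  have hpos : ∀ᶠ z in 𝓝[{z : ℂ | 0 < z.im}] (E0 : ℂ), 0 < z.im := self_mem_nhdsWithin
  have hZ0 : Z m0 = E0 := by
    by_contra hne
    have hd : 0 < dist (Z m0) E0 / 2 := by have := dist_pos.mpr hne; positivity
    obtain ⟨ε, hε, hb1⟩ := Metric.eventually_nhds_iff_ball.mp
      (hZ.continuousAt.eventually (Metric.ball_mem_nhds _ hd))
    have hnear : ∀ᶠ z in 𝓝[{z : ℂ | 0 < z.im}] (E0 : ℂ), dist z (E0 : ℂ) < dist (Z m0) E0 / 2 :=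
      nhdsWithin_le_nhds (Metric.ball_mem_nhds _ hd)
    obtain ⟨z, ⟨h1, h2, h3⟩, h4, h5⟩ :=
      ((hfr (min ε r) (lt_min hε hr)).and_eventually (hpos.and hnear)).exists
    have h6 := (hin z h4 h1 h2 (Metric.ball_subset_ball (min_le_right _ _) h3)).2.2
    have h7 := hb1 _ (Metric.ball_subset_ball (min_le_left _ _) h3)
    have h8 : dist (Z (n z)) (Z m0) < dist (Z m0) E0 / 2 := h7
    rw [h6] at h8
    have := dist_triangle_left (Z m0) E0 z
    linarith
  have hiso : ∀ᶠ m in 𝓝[≠] (m0 : ℂ), Z m - E0 ≠ 0 := by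
    rcases (hZ.sub analyticAt_const).eventually_eq_zero_or_eventually_ne_zero (z₀ := (m0 : ℂ))
      (f := fun m => Z m - E0) with h | h
    · exfalso
      obtain ⟨ε, hε, hb1⟩ := Metric.eventually_nhds_iff_ball.mp h
      obtain ⟨z, ⟨h1, h2, h3⟩, h4⟩ :=
        ((hfr (min ε r) (lt_min hε hr)).and_eventually hpos).exists
      have h6 := (hin z h4 h1 h2 (Metric.ball_subset_ball (min_le_right _ _) h3)).2.2
      have h7 : Z (n z) - E0 = 0 := hb1 _ (Metric.ball_subset_ball (min_le_left _ _) h3)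
      rw [h6, sub_eq_zero] at h7
      rw [h7] at h4
      simp at h4
    · exact h
  have main : ∀ ε > 0, ∀ᶠ z in 𝓝[{z : ℂ | 0 < z.im}] (E0 : ℂ),
      0 < z.im ∧ ωb z ∈ U ∧ ωa z ∈ V ∧ n z ∈ Metric.ball (m0 : ℂ) (min ε r) := by
    intro ε hε
    have hall : ∀ᶠ m : ℂ in 𝓝 (m0 : ℂ), (m ≠ m0 → Z m - E0 ≠ 0) ∧ AnalyticAt ℂ Z m :=
      (eventually_nhdsWithin_iff.mp hiso).and hZ.eventually_analyticAt
    obtain ⟨r2, hr2, hb2⟩ := Metric.eventually_nhds_iff_ball.mp hall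
    obtain ⟨r1, hr1⟩ : ∃ r1, r1 = min r2 (min ε r) / 2 := ⟨_, rfl⟩
    have hr10 : 0 < r1 := by rw [hr1]; have := lt_min hr2 (lt_min hε hr); positivity
    have hr12 : r1 < r2 := by
      have h1 := lt_min hr2 (lt_min hε hr)
      have h2 := min_le_left r2 (min ε r)
      rw [hr1]; linarith
    have hr1m : r1 < min ε r := by
      have h1 := lt_min hr2 (lt_min hε hr)
      have h2 := min_le_right r2 (min ε r)
      rw [hr1]; linarith
    have hr1r : r1 < r := hr1m.trans_le (min_le_right _ _)
    obtain ⟨δ, hδ, hsph⟩ : ∃ δ > 0, ∀ m ∈ Metric.sphere (m0 : ℂ) r1, δ ≤ ‖Z m - E0‖ := by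
      have hcomp := isCompact_sphere (m0 : ℂ) r1
      have hne : (Metric.sphere (m0 : ℂ) r1).Nonempty := (NormedSpace.sphere_nonempty).mpr hr10.le
      have hcont : ContinuousOn (fun m => ‖Z m - E0‖) (Metric.sphere (m0 : ℂ) r1) := by
        intro m hm
        have h1 := (hb2 m (Metric.sphere_subset_ball hr12 hm)).2.continuousAt
        exact (h1.sub continuousAt_const).norm.continuousWithinAt
      obtain ⟨m, hm, hmin⟩ := hcomp.exists_isMinOn hne hcont
      refine ⟨‖Z m - E0‖, norm_pos_iff.mpr ?_, fun m' hm' => hmin hm'⟩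
      exact (hb2 m (Metric.sphere_subset_ball hr12 hm)).1 (Metric.ne_of_mem_sphere hm hr10.ne')
    set D : Set ℂ := Metric.ball (E0 : ℂ) δ ∩ {z : ℂ | 0 < z.im} with hD
    have hDo : IsOpen D := Metric.isOpen_ball.inter hopen
    have hDc : IsPreconnected D :=
      ((convex_ball _ _).inter (convex_halfSpace_im_gt 0)).isPreconnected
    set G : Set ℂ := {z | z ∈ D ∧ ωb z ∈ U ∧ ωa z ∈ V ∧ n z ∈ Metric.ball (m0 : ℂ) r1} with hG
    have hGo : IsOpen G := by
      rw [isOpen_iff_mem_nhds]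
      rintro z ⟨h1, h2, h3, h4⟩
      filter_upwards [hDo.mem_nhds h1, (hωb z h1.2).preimage_mem_nhds (ca.openU.mem_nhds h2),
        (hωa z h1.2).preimage_mem_nhds (cb.openU.mem_nhds h3),
        (hnc z h1.2).preimage_mem_nhds (Metric.isOpen_ball.mem_nhds h4)] with w w1 w2 w3 w4
      exact ⟨w1, w2, w3, w4⟩
    have hDev : ∀ᶠ z in 𝓝[{z : ℂ | 0 < z.im}] (E0 : ℂ), z ∈ D :=
      inter_mem (nhdsWithin_le_nhds (Metric.ball_mem_nhds _ hδ)) self_mem_nhdsWithin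
    have hGne : (D ∩ G).Nonempty := by
      obtain ⟨z, ⟨h1, h2, h3⟩, h4⟩ := ((hfr r1 hr10).and_eventually hDev).exists
      exact ⟨z, h4, h4, h1, h2, h3⟩
    have hDG : D ⊆ G := by
      refine hDc.subset_of_closure_inter_subset hGo hGne ?_
      rintro z ⟨hzc, hzD⟩
      have hz0 : 0 < z.im := hzD.2
      have hnb : (𝓝[G] z).NeBot := mem_closure_iff_nhdsWithin_neBot.mp hzc
      have hball : n z ∈ Metric.closedBall (m0 : ℂ) r1 := by
        refine Metric.isClosed_closedBall.mem_of_tendsto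
          ((hnc z hz0).tendsto.mono_left nhdsWithin_le_nhds : Tendsto n (𝓝[G] z) _) ?_
        filter_upwards [self_mem_nhdsWithin] with w hw
        exact Metric.ball_subset_closedBall hw.2.2.2
      have hbr : n z ∈ Metric.ball (m0 : ℂ) r :=
        Metric.closedBall_subset_ball hr1r hball
      have hgaeq : ga (n z) = ωb z := by
        have t1 : Tendsto (fun w => ga (n w)) (𝓝[G] z) (𝓝 (ga (n z))) :=
          ((ca.cont _ hbr (hnim z hz0)).comp (f := n) (hnc z hz0)).tendsto.mono_left
            nhdsWithin_le_nhds
        have t2 : Tendsto ωb (𝓝[G] z) (𝓝 (ωb z)) := (hωb z hz0).tendsto.mono_left nhdsWithin_le_nhds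
        refine tendsto_nhds_unique_of_eventuallyEq t1 t2 ?_
        filter_upwards [self_mem_nhdsWithin] with w hw
        exact (hin w hw.1.2 hw.2.1 hw.2.2.1 (Metric.ball_subset_ball hr1r.le hw.2.2.2)).1
      have hgbeq : gb (n z) = ωa z := by
        have t1 : Tendsto (fun w => gb (n w)) (𝓝[G] z) (𝓝 (gb (n z))) :=
          ((cb.cont _ hbr (hnim z hz0)).comp (f := n) (hnc z hz0)).tendsto.mono_left
            nhdsWithin_le_nhds
        have t2 : Tendsto ωa (𝓝[G] z) (𝓝 (ωa z)) := (hωa z hz0).tendsto.mono_left nhdsWithin_le_nhds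
        refine tendsto_nhds_unique_of_eventuallyEq t1 t2 ?_
        filter_upwards [self_mem_nhdsWithin] with w hw
        exact (hin w hw.1.2 hw.2.1 hw.2.2.1 (Metric.ball_subset_ball hr1r.le hw.2.2.2)).2.1
      have hUz : ωb z ∈ U := by rw [← hgaeq]; exact (ca.maps _ hbr (hnim z hz0)).1
      have hVz : ωa z ∈ V := by rw [← hgbeq]; exact (cb.maps _ hbr (hnim z hz0)).1
      have hZz := (hin z hz0 hUz hVz hbr).2.2
      refine ⟨hzD, hUz, hVz, ?_⟩
      rw [Metric.mem_ball]
      refine lt_of_le_of_ne hball fun heq => ?_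
      have h1 := hsph (n z) heq
      rw [hZz] at h1
      have h2 : dist z (E0 : ℂ) < δ := hzD.1
      rw [dist_eq_norm] at h2
      linarith
    filter_upwards [hDev] with z hz
    have := hDG hz
    exact ⟨hz.2, this.2.1, this.2.2.1, Metric.ball_subset_ball hr1m.le this.2.2.2⟩
  refine ⟨?_, ?_, r, hr, ?_⟩
  · rw [Metric.tendsto_nhds]
    intro ε hε
    filter_upwards [main ε hε] with z hz
    exact Metric.ball_subset_ball (min_le_left _ _) hz.2.2.2
  · filter_upwards [main 1 one_pos] with z hz
    exact ⟨(hin z hz.1 hz.2.1 hz.2.2.1 (Metric.ball_subset_ball (min_le_right _ _) hz.2.2.2)).2.2,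
      hnim z hz.1⟩
  · intro m1 hm1 m2 hm2 h1 h2 heq hpz
    obtain ⟨-, a1, a2⟩ := ca.maps m1 hm1 h1
    obtain ⟨-, a3, a4⟩ := ca.maps m2 hm2 h2
    obtain ⟨-, b1, b2⟩ := cb.maps m1 hm1 h1
    obtain ⟨-, b3, b4⟩ := cb.maps m2 hm2 h2
    have p1 : SPt μa μb (ga m1) (gb m1) m1 (Z m1) := ⟨a1, b1, hpz, a2, b2, (hZe m1 hm1 h1).symm⟩
    have p2 : SPt μa μb (ga m2) (gb m2) m2 (Z m1) :=
      ⟨a3, b3, hpz, a4, b4, by rw [heq]; exact (hZe m2 hm2 h2).symm⟩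
    exact SPt.unique ha hb p1 p2



lemma ultra_dicho (F : Ultrafilter ℂ) (f : ℂ → ℂ) :
    Tendsto f F (Bornology.cobounded ℂ) ∨ ∃ u0, Tendsto f F (𝓝 u0) := by
  by_cases h : ∃ R : ℝ, Metric.closedBall (0 : ℂ) R ∈ F.map f
  · right
    obtain ⟨R, hR⟩ := h
    obtain ⟨u0, -, h1⟩ := (isCompact_closedBall (0 : ℂ) R).ultrafilter_le_nhds (F.map f)
      (le_principal_iff.mpr hR)
    exact ⟨u0, h1⟩
  · left
    push Not at h
    intro s hs
    obtain ⟨R, hR⟩ := (Metric.isBounded_iff_subset_closedBall (0 : ℂ)).mp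
      (Bornology.isBounded_compl_iff.mpr hs)
    have h1 := Ultrafilter.compl_mem_iff_notMem.mpr (h R)
    have h2 : (Metric.closedBall (0 : ℂ) R)ᶜ ∈ Filter.map f (F : Filter ℂ) := h1
    exact Filter.mem_of_superset h2 (compl_subset_comm.mp hR)

section
variable {μa μb : Measure ℝ} {Sa Sb : Set ℝ} {F : Ultrafilter ℂ} {u v m : ℂ → ℂ}

lemma lim_real0 (ha : Good μa Sa)
    (hp : ∀ᶠ z in (F : Filter ℂ), SPt μa μb (u z) (v z) (m z) z)
    (hm : Tendsto (fun z => (m z).im) F (𝓝 0)) {u0 : ℂ} (hu : Tendsto u F (𝓝 u0)) :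
    u0.im = 0 := by
  have h0 : 0 ≤ u0.im := by
    refine ge_of_tendsto ((Complex.continuous_im.tendsto u0).comp hu) ?_
    filter_upwards [hp] with z hz
    exact hz.hu.le
  by_contra hne
  have hpos : 0 < u0.im := lt_of_le_of_ne h0 (Ne.symm hne)
  have hoff : u0 ∉ Set.image ((↑) : ℝ → ℂ) Sa := Good.off_of_im hpos.ne'
  have h1 : Tendsto (fun z => (mTr μa (u z)).im) F (𝓝 (mTr μa u0).im) :=
    (Complex.continuous_im.tendsto _).comp ((ha.analyticAt hoff).continuousAt.tendsto.comp hu)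
  have h2 := tendsto_nhds_unique_of_eventuallyEq h1 hm (by
    filter_upwards [hp] with z hz
    rw [hz.ma])
  rw [ha.mTr_im hoff] at h2
  exact (mul_pos hpos (ha.Inu_pos hoff)).ne' h2

lemma lim_real (ha : Good μa Sa) (hb : Good μb Sb)
    (hp : ∀ᶠ z in (F : Filter ℂ), SPt μa μb (u z) (v z) (m z) z)
    (hm : Tendsto (fun z => (m z).im) F (𝓝 0)) {u0 : ℂ} (hu : Tendsto u F (𝓝 u0)) :
    ∃ t : ℝ, u0 = t ∧ (t : ℂ) ∉ Set.image ((↑) : ℝ → ℂ) Sa := by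
  have him := lim_real0 ha hp hm hu
  refine ⟨u0.re, Complex.ext (by simp) (by simp [him]), ?_⟩
  rintro ⟨t, ht, hteq⟩
  have hu0 : u0 = (t : ℂ) := by rw [hteq]; exact Complex.ext (by simp) (by simp [him])
  rw [hu0] at hu
  have hu' : Tendsto u F (𝓝[{z : ℂ | 0 < z.im}] (t : ℂ)) := by
    refine tendsto_nhdsWithin_iff.mpr ⟨hu, ?_⟩
    filter_upwards [hp] with z hz
    exact hz.hu
  have hJ : Tendsto (fun z => Inu μa (u z)) F atTop := (ha.Inu_tendsto ht).comp hu'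
  have hs := hu'.eventually (ha.small ht)
  obtain ⟨L, hL0, hL⟩ := hb.bdd
  have hσ := hb.var_pos
  have hbound : ¬ ∃ C, ∀ᶠ z in (F : Filter ℂ), Inu μb (v z) * (L + ‖v z‖) ^ 2 ≤ C := by
    rintro ⟨C, hC⟩
    have h1 := (hJ.const_mul_atTop hσ).eventually_gt_atTop C
    obtain ⟨z, h2, h3, h4⟩ := (hC.and (hp.and h1)).exists
    have := h3.star3 ha hb hL0 hL
    rw [mul_comm] at this
    linarith
  rcases ultra_dicho F v with hv | ⟨v0, hv⟩
  · apply hbound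
    refine ⟨9, ?_⟩
    have h1 := (tendsto_norm_cobounded_atTop.comp hv).eventually_ge_atTop (2 * L)
    filter_upwards [h1] with z hz
    exact hb.Inu_far hL0 hL hz
  · have him2 := lim_real0 hb (hp.mono fun z hz => hz.symm) hm hv
    by_cases hvS : v0 ∈ Set.image ((↑) : ℝ → ℂ) Sb
    · obtain ⟨s, hs', rfl⟩ := hvS
      have hv' : Tendsto v F (𝓝[{z : ℂ | 0 < z.im}] (s : ℂ)) := by
        refine tendsto_nhdsWithin_iff.mpr ⟨hv, ?_⟩
        filter_upwards [hp] with z hz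
        exact hz.hv
      have hs2 := hv'.eventually (hb.small hs')
      obtain ⟨z, h1, h2, h3⟩ := (hp.and (hs.and hs2)).exists
      rw [h1.ma] at h2
      rw [h1.mb] at h3
      have h4 := h1.star ha hb
      have hJa := ha.Inu_pos (Good.off_of_im (S := Sa) h1.hu.ne')
      have hJb := hb.Inu_pos (Good.off_of_im (S := Sb) h1.hv.ne')
      have h5 := mul_le_mul_of_nonneg_left h3 hJa.le
      have h6 := mul_le_mul_of_nonneg_left h2 hJb.le
      have h7 := mul_pos hJa hJb
      nlinarith
    · apply hbound
      obtain ⟨C, hC⟩ := hb.Inu_bdd hvS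
      have h2 : ∀ᶠ w in 𝓝 v0, ‖w‖ < ‖v0‖ + 1 :=
        (continuous_norm.tendsto v0).eventually (gt_mem_nhds (by linarith))
      refine ⟨C * (L + (‖v0‖ + 1)) ^ 2, ?_⟩
      filter_upwards [hv.eventually hC, hv.eventually h2, hp] with z h3 h4 h5
      have hJb := hb.Inu_pos (Good.off_of_im (S := Sb) h5.hv.ne')
      have : 0 ≤ C := hJb.le.trans h3
      gcongr
end

/-- the local data needed to apply the local cusp theorem -/
def Concl (n : ℂ → ℂ) (E0 : ℝ) : Prop := ∃ (m0 : ℝ) (Z : ℂ → ℂ), AnalyticAt ℂ Z m0 ∧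
  (∀ᶠ x : ℝ in 𝓝 m0, (Z x).im = 0) ∧
  Tendsto n (𝓝[{z : ℂ | 0 < z.im}] (E0 : ℂ)) (𝓝 (m0 : ℂ)) ∧
  (∀ᶠ z in 𝓝[{z : ℂ | 0 < z.im}] (E0 : ℂ), Z (n z) = z ∧ 0 < (n z).im) ∧
  (∃ r > 0, ∀ m1 ∈ Metric.ball (m0 : ℂ) r, ∀ m2 ∈ Metric.ball (m0 : ℂ) r, 0 < m1.im →
      0 < m2.im → Z m1 = Z m2 → 0 < (Z m1).im → m1 = m2)

lemma Concl.congr {n n' : ℂ → ℂ} {E0 : ℝ} (h : Concl n E0) (he : ∀ z : ℂ, 0 < z.im → n z = n' z) :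
    Concl n' E0 := by
  obtain ⟨m0, Z, h1, h2, h3, h4, h5⟩ := h
  have hev : ∀ᶠ z in 𝓝[{z : ℂ | 0 < z.im}] (E0 : ℂ), n z = n' z := by
    filter_upwards [self_mem_nhdsWithin] with z hz
    exact he z hz
  refine ⟨m0, Z, h1, h2, h3.congr' hev, ?_, h5⟩
  filter_upwards [h4, hev] with z hz he
  rwa [← he]

lemma IsPairSubordination.symm {μa μb : Measure ℝ} {ωa ωb : ℂ → ℂ}
    (h : IsPairSubordination μa μb ωa ωb) : IsPairSubordination μb μa ωb ωa :=
  ⟨h.diff_b, h.diff_a, h.im_b, h.im_a, h.lim_b, h.lim_a,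
    fun z hz => by rw [add_comm]; exact h.eq_b z hz,
    fun z hz => by rw [add_comm]; exact h.eq_a z hz⟩

section
variable {μa μb : Measure ℝ} {Sa Sb : Set ℝ} {ωa ωb : ℂ → ℂ} {F : Ultrafilter ℂ} {E0 : ℝ}

lemma concl_fin_fin (ha : Good μa Sa) (hb : Good μb Sb) (hsub : IsPairSubordination μa μb ωa ωb)
    (hF : (F : Filter ℂ) ≤ 𝓝[{z : ℂ | 0 < z.im}] (E0 : ℂ)) {t s : ℝ}
    (ht : (t : ℂ) ∉ Set.image ((↑) : ℝ → ℂ) Sa) (hs : (s : ℂ) ∉ Set.image ((↑) : ℝ → ℂ) Sb)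
    (hu : Tendsto ωb F (𝓝 (t : ℂ))) (hv : Tendsto ωa F (𝓝 (s : ℂ))) :
    Concl (fun z => mTr μa (ωb z)) E0 := by
  have hpos : ∀ᶠ z in (F : Filter ℂ), 0 < z.im := hF self_mem_nhdsWithin
  have hp : ∀ᶠ z in (F : Filter ℂ), SPt μa μb (ωb z) (ωa z) (mTr μa (ωb z)) z :=
    hpos.mono fun z hz => hsub.spt hz
  have t1 : Tendsto (fun z => mTr μa (ωb z)) F (𝓝 (mTr μa t)) :=
    (ha.analyticAt ht).continuousAt.tendsto.comp hu
  have t2 : Tendsto (fun z => mTr μb (ωa z)) F (𝓝 (mTr μb s)) :=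
    (hb.analyticAt hs).continuousAt.tendsto.comp hv
  obtain ⟨m0, hm0⟩ : ∃ m0 : ℝ, mTr μa t = m0 := by
    refine ⟨(mTr μa t).re, Complex.ext (by simp) ?_⟩
    rw [ha.mTr_im ht]; simp
  have hm0b : mTr μb s = m0 := by
    rw [← hm0]
    refine (tendsto_nhds_unique_of_eventuallyEq t1 t2 ?_).symm
    filter_upwards [hp] with z hz
    rw [hz.mb]
  have hid : Tendsto (fun z : ℂ => z) F (𝓝 (E0 : ℂ)) := hF.trans nhdsWithin_le_nhds
  have hm0ne : (m0 : ℂ) ≠ 0 := by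
    have h1 := t1.mul ((hu.add hv).sub hid)
    have h2 : Tendsto (fun _ : ℂ => (-1 : ℂ)) F (𝓝 (-1)) := tendsto_const_nhds
    have h3 := tendsto_nhds_unique_of_eventuallyEq h1 h2 (by
      filter_upwards [hp] with z hz
      have hne := hz.m_ne ha
      have he := hz.eq
      set q := mTr μa (ωb z)
      have : ωb z + ωa z - z = -q⁻¹ := by linear_combination he
      rw [this, mul_neg, mul_inv_cancel₀ hne])
    rw [hm0] at h3
    intro h0
    rw [h0, zero_mul] at h3
    norm_num at h3
  rw [hm0] at t1
  obtain ⟨ga, U, ra, ca, hU, gan, gre⟩ := ha.chart_fin ht hm0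
  obtain ⟨gb, V, rb, cb, hV, gbn, gbe⟩ := hb.chart_fin hs hm0b
  have hr : 0 < min ra rb := lt_min ca.hr cb.hr
  have hZ : AnalyticAt ℂ (fun m => ga m + gb m + m⁻¹) m0 :=
    (gan.add gbn).add (analyticAt_id.inv hm0ne)
  refine ⟨m0, fun m => ga m + gb m + m⁻¹, hZ, ?_, ?_⟩
  · filter_upwards [gre, gbe] with x h1 h2
    rw [Complex.add_im, Complex.add_im, h1, h2, ← Complex.ofReal_inv, Complex.ofReal_im]
    simp
  · refine chart_conv ha hb hsub (ca.shrink hr (min_le_left _ _)) (cb.shrink hr (min_le_right _ _))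
      hZ (fun m _ _ => rfl) ?_
    intro ε hε
    refine Filter.Frequently.filter_mono (Filter.Eventually.frequently ?_) hF
    filter_upwards [hu.eventually hU, hv.eventually hV,
      t1.eventually (Metric.ball_mem_nhds _ hε)] with z h1 h2 h3
    exact ⟨h1, h2, h3⟩

lemma concl_fin_inf (ha : Good μa Sa) (hb : Good μb Sb) (hsub : IsPairSubordination μa μb ωa ωb)
    (hF : (F : Filter ℂ) ≤ 𝓝[{z : ℂ | 0 < z.im}] (E0 : ℂ)) {t : ℝ}
    (ht : (t : ℂ) ∉ Set.image ((↑) : ℝ → ℂ) Sa)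
    (hu : Tendsto ωb F (𝓝 (t : ℂ))) (hv : Tendsto ωa F (Bornology.cobounded ℂ)) :
    Concl (fun z => mTr μa (ωb z)) E0 := by
  have hpos : ∀ᶠ z in (F : Filter ℂ), 0 < z.im := hF self_mem_nhdsWithin
  have hp : ∀ᶠ z in (F : Filter ℂ), SPt μa μb (ωb z) (ωa z) (mTr μa (ωb z)) z :=
    hpos.mono fun z hz => hsub.spt hz
  have t1 : Tendsto (fun z => mTr μa (ωb z)) F (𝓝 (mTr μa t)) :=
    (ha.analyticAt ht).continuousAt.tendsto.comp hu
  have t2 : Tendsto (fun z => mTr μb (ωa z)) F (𝓝 0) := hb.lim_inf.1.comp hv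
  have hm0 : mTr μa t = ((0 : ℝ) : ℂ) := by
    rw [Complex.ofReal_zero]
    refine tendsto_nhds_unique_of_eventuallyEq t1 t2 ?_
    filter_upwards [hp] with z hz
    rw [hz.mb]
  rw [hm0] at t1
  obtain ⟨ga, U, ra, ca, hU, gan, gre⟩ := ha.chart_fin ht hm0
  obtain ⟨gb, V, rb, R, cb, hV, Ran, Rre, hR⟩ := hb.chart_inf
  have hr : 0 < min ra rb := lt_min ca.hr cb.hr
  have hZ : AnalyticAt ℂ (fun m => ga m + R m) ((0 : ℝ) : ℂ) := by
    rw [Complex.ofReal_zero] at gan ⊢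
    exact gan.add Ran
  refine ⟨0, fun m => ga m + R m, hZ, ?_, ?_⟩
  · filter_upwards [gre, Rre] with x h1 h2
    rw [Complex.add_im, h1, h2, add_zero]
  · refine chart_conv ha hb hsub (ca.shrink hr (min_le_left _ _)) (cb.shrink hr (min_le_right _ _))
      hZ ?_ ?_
    · intro m hm hi
      rw [hR m (by
        rw [Complex.ofReal_zero] at hm
        exact Metric.ball_subset_ball (min_le_right _ _) hm) hi]
      ring
    intro ε hε
    refine Filter.Frequently.filter_mono (Filter.Eventually.frequently ?_) hF
    filter_upwards [hu.eventually hU, hv.eventually hV,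
      t1.eventually (Metric.ball_mem_nhds _ hε)] with z h1 h2 h3
    exact ⟨h1, h2, h3⟩

theorem concl_main (ha : Good μa Sa) (hb : Good μb Sb) (hsub : IsPairSubordination μa μb ωa ωb)
    (hF : (F : Filter ℂ) ≤ 𝓝[{z : ℂ | 0 < z.im}] (E0 : ℂ))
    (hm : Tendsto (fun z => (mTr μa (ωb z)).im) F (𝓝 0)) :
    Concl (fun z => mTr μa (ωb z)) E0 := by
  have hpos : ∀ᶠ z in (F : Filter ℂ), 0 < z.im := hF self_mem_nhdsWithin
  have hp : ∀ᶠ z in (F : Filter ℂ), SPt μa μb (ωb z) (ωa z) (mTr μa (ωb z)) z :=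
    hpos.mono fun z hz => hsub.spt hz
  have hp' := hp.mono fun z hz => hz.symm
  rcases ultra_dicho F ωb with hu | ⟨u0, hu⟩ <;> rcases ultra_dicho F ωa with hv | ⟨v0, hv⟩
  · exfalso
    obtain ⟨c, hc⟩ := hb.lim_inf.2
    have h1 := hc.comp hv
    have hid : Tendsto (fun z : ℂ => z) F (𝓝 (E0 : ℂ)) := hF.trans nhdsWithin_le_nhds
    have h2 : Tendsto ωb F (𝓝 ((E0 : ℂ) - c)) := by
      refine (hid.sub h1).congr' ?_
      filter_upwards [hp] with z hz
      have he := hz.eq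
      have hmb := hz.mb
      simp only [Function.comp]
      rw [hmb]
      linear_combination -he
    exact (h2.not_tendsto (Metric.disjoint_nhds_cobounded _)) hu
  · obtain ⟨s, rfl, hs⟩ := lim_real hb ha hp' hm hv
    refine (concl_fin_inf hb ha hsub.symm hF hs hv hu).congr fun z hz => ?_
    exact (hsub.spt hz).mb
  · obtain ⟨t, rfl, ht⟩ := lim_real ha hb hp hm hu
    exact concl_fin_inf ha hb hsub hF ht hu hv
  · obtain ⟨t, rfl, ht⟩ := lim_real ha hb hp hm hu
    obtain ⟨s, rfl, hs⟩ := lim_real hb ha hp' hm hv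
    exact concl_fin_fin ha hb hsub hF ht hs hu hv
end



lemma dens_integrable {ν : Measure ℝ} [IsProbabilityMeasure ν] {r : ℝ → ℝ} (hc : Continuous r)
    (hnn : ∀ x, 0 ≤ r x) (hd : ν = volume.withDensity (fun x => ENNReal.ofReal (r x))) :
    Integrable r := by
  refine ⟨hc.aestronglyMeasurable, ?_⟩
  rw [hasFiniteIntegral_iff_ofReal (ae_of_all _ hnn)]
  have h1 : ν univ = ∫⁻ x, ENNReal.ofReal (r x) := by
    rw [hd, withDensity_apply _ MeasurableSet.univ, Measure.restrict_univ]
  rw [← h1]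
  exact measure_lt_top _ _

lemma mTr_im_dens {ν : Measure ℝ} [IsProbabilityMeasure ν] {r : ℝ → ℝ} (hc : Continuous r)
    (hnn : ∀ x, 0 ≤ r x) (hd : ν = volume.withDensity (fun x => ENNReal.ofReal (r x)))
    (E : ℝ) {η : ℝ} (hη : 0 < η) :
    (mTr ν (E + η * I)).im = ∫ x : ℝ, (η / ((x - E) ^ 2 + η ^ 2)) * r x := by
  have hne : ∀ x : ℝ, (x : ℂ) - (E + η * I) ≠ 0 := by
    intro x h
    have := congrArg Complex.im h
    simp at this
    exact hη.ne' this
  have hint : Integrable (fun x : ℝ => ((x : ℂ) - (E + η * I))⁻¹) ν := by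
    refine Integrable.of_bound (C := η⁻¹) ?_ (ae_of_all _ fun x => ?_)
    · apply Continuous.aestronglyMeasurable
      exact Continuous.inv₀ (by fun_prop) hne
    · rw [norm_inv]
      apply inv_anti₀ hη
      have := Complex.abs_im_le_norm ((x : ℂ) - (E + η * I))
      simp only [sub_im, ofReal_im, add_im, mul_im, ofReal_re, I_im, mul_one, I_re, mul_zero,
        add_zero, zero_add, zero_sub, abs_neg, abs_of_pos hη] at this
      exact this
  have h1 : (mTr ν (E + η * I)).im = ∫ x : ℝ, (((x : ℂ) - (E + η * I))⁻¹).im ∂ν := by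
    unfold mTr
    exact (integral_im hint).symm
  rw [h1, hd, integral_withDensity_eq_integral_toReal_smul (by fun_prop) (ae_of_all _ (by simp))]
  congr 1
  ext x
  rw [ENNReal.toReal_ofReal (hnn x), smul_eq_mul, mul_comm, Complex.inv_im, Complex.normSq_apply]
  simp
  left
  ring

lemma poisson {ν : Measure ℝ} [IsProbabilityMeasure ν] {r : ℝ → ℝ} (hc : Continuous r)
    (hnn : ∀ x, 0 ≤ r x) (hd : ν = volume.withDensity (fun x => ENNReal.ofReal (r x)))
    (E : ℝ) :
    Tendsto (fun η : ℝ => (mTr ν (E + η * I)).im) (𝓝[>] 0) (𝓝 (Real.pi * r E)) := by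
  have hpi := Real.pi_pos
  have key := tendsto_integral_comp_smul_smul_of_integrable' (μ := (volume : Measure ℝ))
    (φ := fun x : ℝ => Real.pi⁻¹ * (1 + x ^ 2)⁻¹) (g := r) (x₀ := E)
    (fun x => by positivity)
    (by rw [integral_const_mul, integral_univ_inv_one_add_sq]; field_simp)
    (by
      simp only [Module.finrank_self, pow_one]
      have h0 : Tendsto (fun x : ℝ => Real.pi⁻¹ * ‖x‖⁻¹) (Bornology.cobounded ℝ) (𝓝 0) := by
        have := (tendsto_inv_atTop_zero.comp (tendsto_norm_cobounded_atTop (E := ℝ))).const_mul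
          Real.pi⁻¹
        simpa using this
      refine squeeze_zero (fun x => by positivity) (fun x => ?_) h0
      rcases eq_or_ne x 0 with rfl | hx
      · simp
      have hx' : 0 < ‖x‖ := norm_pos_iff.mpr hx
      have hsq : x ^ 2 = ‖x‖ ^ 2 := by simp
      rw [hsq]
      have : ‖x‖ * (1 + ‖x‖ ^ 2)⁻¹ ≤ ‖x‖⁻¹ := by
        rw [← div_eq_mul_inv, ← one_div, div_le_div_iff₀ (by positivity) hx']
        nlinarith
      calc ‖x‖ * (Real.pi⁻¹ * (1 + ‖x‖ ^ 2)⁻¹) = Real.pi⁻¹ * (‖x‖ * (1 + ‖x‖ ^ 2)⁻¹) := by ring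
        _ ≤ _ := by gcongr)
    (dens_integrable hc hnn hd) hc.continuousAt
  have k2 := (key.comp tendsto_inv_nhdsGT_zero).const_mul Real.pi
  refine k2.congr' ?_
  filter_upwards [self_mem_nhdsWithin] with η hη
  have hη : 0 < η := hη
  rw [mTr_im_dens hc hnn hd E hη]
  simp only [Function.comp, Module.finrank_self, pow_one, smul_eq_mul]
  rw [← integral_const_mul]
  congr 1
  ext x
  field_simp
  ring

lemma hnv_aux {ν : Measure ℝ} {r : ℝ → ℝ}
    (hd : ν = volume.withDensity (fun x => ENNReal.ofReal (r x))) {a b x : ℝ}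
    (hx : x ∈ msupport ν) (hab : x ∈ Ioo a b) : ∃ E, a < E ∧ E < b ∧ r E ≠ 0 := by
  by_contra h
  push Not at h
  have h1 := hx (Ioo a b) isOpen_Ioo hab
  rw [hd, withDensity_apply _ measurableSet_Ioo,
    setLIntegral_congr_fun (g := fun _ => 0) measurableSet_Ioo
      (fun y hy => by simp [h y hy.1 hy.2])] at h1
  simp at h1

lemma final_cusp (μa μb : Measure ℝ)
    (da : AbsJacobiData μa) (db : AbsJacobiData μb)
    (ωa ωb : ℂ → ℂ) (hsub : IsPairSubordination μa μb ωa ωb)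
    (ν : Measure ℝ) (hν : IsFreeConv μa μb ωb ν)
    (ρab : ℝ → ℝ) (hcont : Continuous ρab) (hnn : ∀ x, 0 ≤ ρab x)
    (hdens : ν = volume.withDensity (fun x => ENNReal.ofReal (ρab x)))
    (E0 : ℝ) (hE0 : E0 ∈ frontier {E : ℝ | 0 < ρab E})
    (hint : ∃ ε₀ > (0 : ℝ), ∀ ε : ℝ, 0 < ε → ε < ε₀ →
      E0 - ε ∈ msupport ν ∧ E0 + ε ∈ msupport ν) :
    ∃ C2 > (0 : ℝ), ∃ K > (0 : ℝ), ∃ δ > (0 : ℝ),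
      ∀ E : ℝ, 0 < |E - E0| → |E - E0| < δ →
        |ρab E - C2 * |E - E0| ^ ((1 : ℝ) / 3)| ≤ K * |E - E0| ^ ((2 : ℝ) / 3) := by
  obtain ⟨hprob, hm⟩ := hν
  have hz : ρab E0 = 0 := by
    have hopen : IsOpen {E : ℝ | 0 < ρab E} := isOpen_lt continuous_const hcont
    rw [hopen.frontier_eq] at hE0
    have := hE0.2
    simp only [mem_ofPred_eq, not_lt] at this
    exact le_antisymm this (hnn _)
  have hP := poisson hcont hnn hdens
  have hG : Tendsto (fun η : ℝ => ((E0 : ℂ) + η * I)) (𝓝[>] 0) (𝓝[{z : ℂ | 0 < z.im}] (E0 : ℂ)) := by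
    apply tendsto_nhdsWithin_iff.mpr
    constructor
    · have : Continuous (fun η : ℝ => ((E0 : ℂ) + η * I)) := by fun_prop
      have h := (this.tendsto 0).mono_left (nhdsWithin_le_nhds (s := Ioi 0))
      simpa using h
    · filter_upwards [self_mem_nhdsWithin] with η hη
      simpa using hη
  let G : Filter ℂ := map (fun η : ℝ => ((E0 : ℂ) + η * I)) (𝓝[>] 0)
  have hGne : G.NeBot := inferInstance
  let F : Ultrafilter ℂ := Ultrafilter.of G
  have hF : (F : Filter ℂ) ≤ G := Ultrafilter.of_le G
  have hFn : (F : Filter ℂ) ≤ 𝓝[{z : ℂ | 0 < z.im}] (E0 : ℂ) := hF.trans hG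
  have hF0 : Tendsto (fun z => (mTr μa (ωb z)).im) F (𝓝 0) := by
    have h1 : Tendsto (fun z => (mTr ν z).im) F (𝓝 0) := by
      have h2 := hP E0
      rw [hz, mul_zero] at h2
      have h3 : Tendsto (fun z => (mTr ν z).im) G (𝓝 0) := tendsto_map'_iff.mpr h2
      exact h3.mono_left hF
    refine h1.congr' ?_
    have : ∀ᶠ z in 𝓝[{z : ℂ | 0 < z.im}] (E0 : ℂ), (mTr ν z).im = (mTr μa (ωb z)).im := by
      filter_upwards [self_mem_nhdsWithin] with z hz
      rw [hm z hz]
    exact hFn this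
  have hC := (concl_main da.good db.good hsub hFn hF0).congr (n' := mTr ν)
    (fun z hz => (hm z hz).symm)
  obtain ⟨m0, Z, h1, h2, h3, h4, h5⟩ := hC
  refine local_cusp h1 h2 h3 h4 h5 hP ?_
  obtain ⟨ε₀, hε, hs⟩ := hint
  intro δ hδ
  have hmin : 0 < min δ ε₀ := lt_min hδ hε
  have hl := min_le_left δ ε₀
  have hr := min_le_right δ ε₀
  obtain ⟨hs1, hs2⟩ := hs (min δ ε₀ / 2) (by linarith) (by linarith)
  exact ⟨hnv_aux hdens hs2 ⟨by linarith, by linarith⟩, hnv_aux hdens hs1 ⟨by linarith, by linarith⟩⟩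


/-- Theorem 2.6, interior points: two-sided cubic-root cusp of the
density of `μ_α ⊞ μ_β` at any interior point `E₀` of `𝒱_{α⊞β}`. -/
theorem statement19 (μa μb : Measure ℝ)
    (da : AbsJacobiData μa) (db : AbsJacobiData μb)
    (ωa ωb : ℂ → ℂ) (hsub : IsPairSubordination μa μb ωa ωb)
    (ν : Measure ℝ) (hν : IsFreeConv μa μb ωb ν)
    (ρab : ℝ → ℝ) (hcont : Continuous ρab) (hnn : ∀ x, 0 ≤ ρab x)
    (hdens : ν = volume.withDensity (fun x => ENNReal.ofReal (ρab x)))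
    (E0 : ℝ) (hE0 : E0 ∈ frontier {E : ℝ | 0 < ρab E})
    (hint : ∃ ε₀ > (0 : ℝ), ∀ ε : ℝ, 0 < ε → ε < ε₀ →
      E0 - ε ∈ msupport ν ∧ E0 + ε ∈ msupport ν) :
    ∃ C2 > (0 : ℝ), ∃ K > (0 : ℝ), ∃ δ > (0 : ℝ),
      ∀ E : ℝ, 0 < |E - E0| → |E - E0| < δ →
        |ρab E - C2 * |E - E0| ^ ((1 : ℝ) / 3)| ≤ K * |E - E0| ^ ((2 : ℝ) / 3) := by
  exact final_cusp μa μb da db ωa ωb hsub ν hν ρab hcont hnn hdens E0 hE0 hint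

end
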